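/- Let X be a smooth extremal surface of degree d = q+1 ≥ 5 in ℙ³(k). Then the number N of double 2d's all of whose 4d lines lie on X satisfies 16·N ≥ (q³+1)(q²+1)(q−1)²q⁷. -/

import Mathlib

open Module

/-! Basic setup: `k` is an algebraically closed field of characteristic `p > 0`,
`q = p^e`.  We model ℙ³(k) via linear subspaces of `k⁴ = Fin 4 → k`:
points, lines and planes of ℙ³(k) are subspaces of dimension 1, 2 and 3
respectively.  A hypersurface cut out by a homogeneous form is recorded by its
affine cone in `k⁴`. -/

/-- The Frobenius form in 4 variables determined by a 4×4 matrix `A`: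
`∑ i j, A i j * x i ^ q * x j`, a homogeneous form of degree `q+1`. -/
def frobForm {k : Type*} [Field k] (q : ℕ) (A : Matrix (Fin 4) (Fin 4) k)
    (x : Fin 4 → k) : k :=
  ∑ i, ∑ j, A i j * x i ^ q * x j

/-- The affine cone in `k⁴` of the extremal surface in ℙ³(k) cut out by the
Frobenius form with matrix `A`; a point of ℙ³(k) lies on the surface iff its
homogeneous coordinate representatives lie in this set. -/
def extremalCone (k : Type*) [Field k] (q : ℕ) (A : Matrix (Fin 4) (Fin 4) k) :
    Set (Fin 4 → k) :=
  {x | frobForm q A x = 0}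

/-- A point of ℙ³(k): a 1-dimensional subspace of `k⁴`. -/
def IsPoint {k : Type*} [Field k] (c : Submodule k (Fin 4 → k)) : Prop :=
  finrank k c = 1

/-- A line of ℙ³(k): a 2-dimensional subspace of `k⁴`. -/
def IsLine {k : Type*} [Field k] (L : Submodule k (Fin 4 → k)) : Prop :=
  finrank k L = 2

/-- A plane of ℙ³(k): a 3-dimensional subspace of `k⁴`. -/
def IsPlane {k : Type*} [Field k] (H : Submodule k (Fin 4 → k)) : Prop :=
  finrank k H = 3

/-- `L` is a line lying on the surface with affine cone `X`. -/
def IsLineOn {k : Type*} [Field k] (X : Set (Fin 4 → k))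
    (L : Submodule k (Fin 4 → k)) : Prop :=
  IsLine L ∧ (L : Set (Fin 4 → k)) ⊆ X

/-- Two lines of ℙ³(k) meet iff the corresponding subspaces of `k⁴` intersect
nontrivially. -/
def MeetsLine {k : Type*} [Field k] (L M : Submodule k (Fin 4 → k)) : Prop :=
  L ⊓ M ≠ ⊥

/-- Two lines of ℙ³(k) are skew iff the corresponding subspaces of `k⁴`
intersect trivially. -/
def SkewLine {k : Type*} [Field k] (L M : Submodule k (Fin 4 → k)) : Prop :=
  L ⊓ M = ⊥

/-- `IsStarAt q X S c`: `S` is a star on the surface with affine cone `X`,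
centered at the point `c`, i.e. a set of `q+1` distinct lines on the surface
all passing through `c`. -/
def IsStarAt {k : Type*} [Field k] (q : ℕ) (X : Set (Fin 4 → k))
    (S : Set (Submodule k (Fin 4 → k))) (c : Submodule k (Fin 4 → k)) : Prop :=
  IsPoint c ∧ S.ncard = q + 1 ∧ ∀ L ∈ S, IsLineOn X L ∧ c ≤ L

/-- `S` is a star on the surface with affine cone `X`. -/
def IsStar {k : Type*} [Field k] (q : ℕ) (X : Set (Fin 4 → k))
    (S : Set (Submodule k (Fin 4 → k))) : Prop :=
  ∃ c, IsStarAt q X S c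

/-- `c` is a star point of the surface with affine cone `X`. -/
def IsStarPoint {k : Type*} [Field k] (q : ℕ) (X : Set (Fin 4 → k))
    (c : Submodule k (Fin 4 → k)) : Prop :=
  ∃ S, IsStarAt q X S c

/-- `H` is a star plane of the surface with affine cone `X`, centered at `c`:
the plane section `X ∩ H` is the union of a star centered at `c`. -/
def IsStarPlaneAt {k : Type*} [Field k] (q : ℕ) (X : Set (Fin 4 → k))
    (H c : Submodule k (Fin 4 → k)) : Prop :=
  IsPlane H ∧ ∃ S, IsStarAt q X S c ∧
    X ∩ (H : Set (Fin 4 → k)) = ⋃ L ∈ S, (L : Set (Fin 4 → k))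

/-- An element of `Aut(X)`: since every projective linear automorphism of
ℙ³(k) is represented by an invertible linear map of `k⁴` (uniquely up to
scalars, which act trivially on subspaces and preserve every cone), `g ∈
PGL(4,k)` with `g(X) = X` corresponds to a linear automorphism of `k⁴`
mapping the affine cone `X` onto itself. -/
def PreservesCone {k : Type*} [Field k] (X : Set (Fin 4 → k))
    (g : (Fin 4 → k) ≃ₗ[k] (Fin 4 → k)) : Prop :=
  (⇑g) '' X = X

/-- A double `2d`: a pair of sets `𝒜`, `ℬ`, each consisting of `2d` lines in
ℙ³(k), such that the lines within `𝒜` are pairwise skew, the lines within `ℬ`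
are pairwise skew, each line of `𝒜` meets exactly `d+2` lines of `ℬ`, and
each line of `ℬ` meets exactly `d+2` lines of `𝒜`. -/
def IsDoubleTwoD {k : Type*} [Field k] (d : ℕ)
    (𝒜 ℬ : Set (Submodule k (Fin 4 → k))) : Prop :=
  𝒜.ncard = 2 * d ∧ ℬ.ncard = 2 * d ∧
  (∀ L ∈ 𝒜, IsLine L) ∧ (∀ L ∈ ℬ, IsLine L) ∧
  (∀ L ∈ 𝒜, ∀ M ∈ 𝒜, L ≠ M → SkewLine L M) ∧
  (∀ L ∈ ℬ, ∀ M ∈ ℬ, L ≠ M → SkewLine L M) ∧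
  (∀ L ∈ 𝒜, {M ∈ ℬ | MeetsLine L M}.ncard = d + 2) ∧
  (∀ M ∈ ℬ, {L ∈ 𝒜 | MeetsLine L M}.ncard = d + 2)

/-!
Let `σ` be the `q`-power Frobenius. Polarizing the Frobenius form gives a form `β`, `σ`-semilinear
in its first argument, with `X = {β v v = 0}`. By Lang's theorem `k⁴` is spanned by the vectors `v`
with `β w v = σ (β v w)` for all `w`. These form a Hermitian space over `𝔽_{q²}`, whose
`q⁶ (q + 1) (q² - 1) (q³ + 1) (q⁴ - 1)` orthonormal bases are coordinate systems in which `X` is the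
Fermat surface `∑ xᵢ^(q+1) = 0`.

In such coordinates, for distinct `(q + 1)`-st roots of unity `c` and `c'`, each of the quadrics
`x₁x₃ = c x₀x₂` and `x₁x₃ = c' x₀x₂` has `q + 1` lines of each of its rulings in common with `X`.
One ruling of the first quadric and the opposite ruling of the second form one half of a double
`2(q + 1)`, and the two remaining rulings form the other half.

Conversely, of the at least five lines of one ruling three lie on a single quadric of any other such
presentation of the same half, and three skew lines determine their quadric. So the half determines
the pencil of its two quadrics, hence the quadrilateral `x₀x₂ = x₁x₃ = 0`, hence the frame up to at
most 16 index maps and `(q + 1)⁴` rescalings; together with the frame it determines `(c, c')`. Each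
double therefore arises from at most `16 (q + 1)⁴` of the triples (frame, `c`, `c'`).
-/

/-- `σ` is the `q`-power Frobenius endomorphism of a field in which `q` vanishes. -/
structure IsFrobeniusPower {k : Type*} [Field k] (σ : k →+* k) (q : ℕ) : Prop where
  apply (x : k) : σ x = x ^ q
  cast_eq_zero : (q : k) = 0

lemma map_map_eq_self_of_mul_map_eq {k : Type*} [Field k] {σ : k →+* k} {x c : k}
    (hx : x * σ x = c) (hc : σ c = c) (hc0 : c ≠ 0) : σ (σ x) = x := by
  have := hx.trans (hc.symm.trans (congrArg σ hx.symm))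
  rw [map_mul, mul_comm (σ x)] at this
  exact (mul_right_cancel₀ (right_ne_zero_of_mul (hx.trans_ne hc0)) this).symm

namespace IsFrobeniusPower

variable {k : Type*} [Field k] {σ : k →+* k} {q : ℕ}

lemma one_lt (hσ : IsFrobeniusPower σ q) : 1 < q := by
  have q_ne_zero : q ≠ 0 := by
    rintro rfl
    simpa using (hσ.apply 0).symm
  have q_ne_one : q ≠ 1 := by
    rintro rfl
    simpa using hσ.cast_eq_zero
  omega

lemma comp_self (hσ : IsFrobeniusPower σ q) : IsFrobeniusPower (σ.comp σ) (q ^ 2) where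
  apply x := by rw [RingHom.comp_apply, hσ.apply, hσ.apply, ← pow_mul, sq]
  cast_eq_zero := by rw [Nat.cast_pow, hσ.cast_eq_zero, zero_pow two_ne_zero]

lemma pow_succ_eq_mul (hσ : IsFrobeniusPower σ q) (x : k) : x ^ (q + 1) = x * σ x := by
  rw [hσ.apply, pow_succ']

lemma cast_succ_ne_zero (hσ : IsFrobeniusPower σ q) : ((q + 1 : ℕ) : k) ≠ 0 := by
  simp [hσ.cast_eq_zero]

variable [IsAlgClosed k]

lemma surjective (hσ : IsFrobeniusPower σ q) : Function.Surjective σ := fun c ↦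
  let ⟨d, hd⟩ := IsAlgClosed.exists_pow_nat_eq c (zero_lt_one.trans hσ.one_lt)
  ⟨d, (hσ.apply d).trans hd⟩

open Polynomial in
lemma exists_apply_add_mul_eq (hσ : IsFrobeniusPower σ q) (a c : k) : ∃ d, σ d + a * d = c := by
  have deg_lt : (C (-a) * X + C c : k[X]).degree < q :=
    degree_linear_le.trans_lt (by exact_mod_cast hσ.one_lt)
  obtain ⟨d, hd⟩ := IsAlgClosed.exists_root (X ^ q - (C (-a) * X + C c) : k[X]) <| by
    rw [degree_sub_eq_left_of_degree_lt (by rwa [degree_X_pow]), degree_X_pow]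
    exact_mod_cast (zero_lt_one.trans hσ.one_lt).ne'
  refine ⟨d, ?_⟩
  simp only [IsRoot, eval_sub, eval_pow, eval_X, eval_add, eval_mul, eval_C] at hd
  rw [hσ.apply]
  linear_combination hd

lemma exists_mul_apply_eq (hσ : IsFrobeniusPower σ q) (c : k) : ∃ x, x * σ x = c :=
  let ⟨x, hx⟩ := IsAlgClosed.exists_pow_nat_eq c q.succ_pos
  ⟨x, (hσ.pow_succ_eq_mul x).symm.trans hx⟩

end IsFrobeniusPower

section RootCounts

open Polynomial

variable {k : Type*} [Field k]

lemma finite_setOf_pow_eq {n : ℕ} (hn : n ≠ 0) (c : k) : {x : k | x ^ n = c}.Finite := by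
  refine (rootSet_finite (X ^ n - C c : k[X]) k).subset fun x hx ↦ ?_
  simpa [mem_rootSet, X_pow_sub_C_ne_zero (Nat.pos_of_ne_zero hn), sub_eq_zero] using hx

variable [IsAlgClosed k]

lemma ncard_setOf_eval_eq_zero {f : k[X]} (hf : f.Separable) :
    {x | f.eval x = 0}.ncard = f.natDegree := by
  have : {x | f.eval x = 0} = f.rootSet k := by
    ext x
    simp [mem_rootSet, hf.ne_zero]
  rw [this, ← Nat.card_coe_set_eq, Nat.card_eq_fintype_card,
    card_rootSet_eq_natDegree hf (IsAlgClosed.splits _)]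

lemma ncard_setOf_pow_eq {n : ℕ} (hn : (n : k) ≠ 0) {c : k} (hc : c ≠ 0) :
    {x : k | x ^ n = c}.ncard = n := by
  simpa [sub_eq_zero] using ncard_setOf_eval_eq_zero (separable_X_pow_sub_C c hn hc)

lemma IsFrobeniusPower.ncard_fixed {σ : k →+* k} {q : ℕ} (hσ : IsFrobeniusPower σ q) :
    {x | σ x = x}.ncard = q := by
  have separable : (X ^ q - X : k[X]).Separable := by
    rw [Separable, derivative_sub, derivative_X_pow, derivative_X, hσ.cast_eq_zero]
    simpa using isCoprime_one_right.neg_right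
  simpa [hσ.apply, sub_eq_zero, FiniteField.X_pow_card_sub_X_natDegree_eq k hσ.one_lt] using
    ncard_setOf_eval_eq_zero separable

lemma IsFrobeniusPower.finite_fixed {σ : k →+* k} {q : ℕ} (hσ : IsFrobeniusPower σ q) :
    {x | σ x = x}.Finite :=
  Set.finite_of_ncard_pos (hσ.ncard_fixed ▸ zero_lt_one.trans hσ.one_lt)

end RootCounts

section CyclicRelation

variable {k : Type*} [Field k] {σ : k →+* k} {V : Type*} [AddCommGroup V] [Module k V]

lemma linearIndependent_of_forall_notMem_span {u : ℕ → V} {n : ℕ}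
    (h : ∀ m < n, u m ∉ Submodule.span k (Set.range fun i : Fin m ↦ u i)) :
    LinearIndependent k fun i : Fin n ↦ u i := by
  induction n with
  | zero => exact linearIndependent_empty_type
  | succ n ih => exact linearIndependent_finSucc'.2 ⟨ih fun m hm ↦ h m (hm.trans n.lt_succ_self),
      h n n.lt_succ_self⟩

/-- The relation says that `Φ` acts on the cyclic subspace of `v` by a companion matrix. -/
lemma exists_cyclic_relation [FiniteDimensional k V] {Φ : V →ₛₗ[σ] V} (hΦ : Function.Injective Φ)
    {v : V} (hv : v ≠ 0) :
    ∃ (l : ℕ) (c : ℕ → k), (∃ i ≤ l, c i ≠ 0) ∧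
      LinearIndependent k (fun i : Fin (l + 1) ↦ Φ^[i] v) ∧
      Φ^[l + 1] v = ∑ i ∈ Finset.range (l + 1), c i • Φ^[i] v := by
  classical
  set u : ℕ → V := fun n ↦ Φ^[n] v
  have dependent : ∃ n, u n ∈ Submodule.span k (Set.range fun i : Fin n ↦ u i) := by
    by_contra! h
    simpa using (linearIndependent_of_forall_notMem_span (n := finrank k V + 1)
      fun m _ ↦ h m).fintype_card_le_finrank
  have minimal (m : ℕ) (hm : m < Nat.find dependent) := Nat.find_min dependent hm
  have mem_span := Nat.find_spec dependent
  generalize Nat.find dependent = n at minimal mem_span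
  obtain _ | l := n
  · exact absurd (by simpa [u] using mem_span) hv
  obtain ⟨c, hc⟩ := (Submodule.mem_span_range_iff_exists_fun k).1 mem_span
  have relation : u (l + 1) = ∑ i ∈ Finset.range (l + 1), Function.extend Fin.val c 0 i • u i := by
    simp only [Finset.sum_range, Fin.val_injective.extend_apply]
    exact hc.symm
  refine ⟨l, _, ?_, linearIndependent_of_forall_notMem_span minimal, relation⟩
  by_contra! h
  refine hv (hΦ.iterate (l + 1) ?_)
  rw [iterate_map_zero]
  refine relation.trans (Finset.sum_eq_zero fun i hi ↦ ?_)
  rw [h i (Nat.lt_succ_iff.1 (Finset.mem_range.1 hi)), zero_smul]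

end CyclicRelation

section Lang

open Polynomial

variable {k : Type*} [Field k] [IsAlgClosed k] {σ : k →+* k} {q : ℕ}

namespace IsFrobeniusPower

lemma exists_sum_mul_pow_eq_self (hσ : IsFrobeniusPower σ q) {l : ℕ} {c : ℕ → k}
    (hc : ∃ i ≤ l, c i ≠ 0) :
    ∃ t ≠ 0, ∑ i ∈ Finset.range (l + 1), c i * t ^ q ^ (i + 1) = t := by
  obtain ⟨j, hj, hcj⟩ := hc
  set e : ℕ → ℕ := fun i ↦ q ^ (i + 1) - 1
  have e_pos (i : ℕ) : 0 < e i := Nat.sub_pos_of_lt (Nat.one_lt_pow i.succ_ne_zero hσ.one_lt)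
  have e_add_one (i : ℕ) : e i + 1 = q ^ (i + 1) :=
    Nat.sub_add_cancel (Nat.one_le_pow _ _ (zero_lt_one.trans hσ.one_lt))
  have e_injective : Function.Injective e := fun i i' h ↦ by
    simpa using Nat.pow_right_injective hσ.one_lt
      (by simp only [← e_add_one, h] : q ^ (i + 1) = q ^ (i' + 1))
  set P : k[X] := ∑ i ∈ Finset.range (l + 1), C (c i) * X ^ e i - 1
  have coeff_P : P.coeff (e j) = c j := by
    have h (i : ℕ) : e j = e i ↔ j = i := e_injective.eq_iff
    simpa [P, coeff_C_mul, coeff_X_pow, coeff_one, h, (e_pos j).ne'] using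
      fun hlt : l < j ↦ absurd hlt hj.not_gt
  obtain ⟨t, ht⟩ := IsAlgClosed.exists_root P fun hdeg ↦ hcj <| by
    rw [← coeff_P, coeff_eq_zero_of_degree_lt]
    rw [hdeg]
    exact_mod_cast e_pos j
  have eval_eq : ∑ i ∈ Finset.range (l + 1), c i * t ^ e i = 1 := by
    simpa [P, IsRoot, eval_finsetSum, sub_eq_zero] using ht
  refine ⟨t, ?_, ?_⟩
  · rintro rfl
    simp [(e_pos _).ne'] at eval_eq
  · calc ∑ i ∈ Finset.range (l + 1), c i * t ^ q ^ (i + 1)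
        = (∑ i ∈ Finset.range (l + 1), c i * t ^ e i) * t := by
          simp only [Finset.sum_mul, mul_assoc, ← pow_succ, e_add_one]
      _ = t := by rw [eval_eq, one_mul]

lemma exists_recurrence_eq (hσ : IsFrobeniusPower σ q) {l : ℕ} {c : ℕ → k}
    (hc : ∃ i ≤ l, c i ≠ 0) :
    ∃ t ≠ 0, ∃ a : ℕ → k, a l = t ∧ a 0 = c 0 * σ t ∧
      ∀ j, a (j + 1) = σ (a j) + c (j + 1) * σ t := by
  obtain ⟨i, hi, hci⟩ := hc
  obtain ⟨t, ht0, ht⟩ := hσ.exists_sum_mul_pow_eq_self (l := l)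
    (c := fun i ↦ c (l - i) ^ q ^ i) ⟨l - i, Nat.sub_le l i,
      pow_ne_zero _ (by rwa [Nat.sub_sub_self hi])⟩
  refine ⟨t, ht0, fun j ↦ ∑ i ∈ Finset.range (j + 1), (c (j - i) * σ t) ^ q ^ i, ?_, ?_,
    fun j ↦ ?_⟩
  · refine Eq.trans (Finset.sum_congr rfl fun i _ ↦ ?_) ht
    rw [mul_pow, hσ.apply, ← pow_mul, ← pow_succ']
  · simp
  · simp [Finset.sum_range_succ' _ (j + 1), map_sum, hσ.apply (_ ^ _), ← pow_mul, pow_succ]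

variable {V : Type*} [AddCommGroup V] [Module k V] {Φ : V →ₛₗ[σ] V}

lemma exists_fixed_ne_zero [FiniteDimensional k V] [Nontrivial V] (hσ : IsFrobeniusPower σ q)
    (hΦ : Function.Injective Φ) : ∃ v ≠ 0, Φ v = v := by
  obtain ⟨v, hv⟩ := exists_ne (0 : V)
  obtain ⟨l, c, hc, independent, relation⟩ := exists_cyclic_relation hΦ hv
  obtain ⟨t, ht, a, a_last, a_zero, a_succ⟩ := hσ.exists_recurrence_eq hc
  refine ⟨∑ i ∈ Finset.range (l + 1), a i • Φ^[i] v, fun h ↦ ht ?_, ?_⟩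
  · rw [Finset.sum_range] at h
    simpa [a_last] using Fintype.linearIndependent_iff.1 independent (fun i ↦ a i) h (Fin.last l)
  · calc Φ (∑ i ∈ Finset.range (l + 1), a i • Φ^[i] v)
        = ∑ i ∈ Finset.range l, σ (a i) • Φ^[i + 1] v + σ t • Φ^[l + 1] v := by
          simp only [Finset.sum_range_succ, a_last, map_add, map_sum, map_smulₛₗ,
            Function.iterate_succ_apply']
      _ = ∑ i ∈ Finset.range l, (σ (a i) + c (i + 1) * σ t) • Φ^[i + 1] v +
            (c 0 * σ t) • Φ^[0] v := by
          rw [relation, Finset.sum_range_succ', smul_add, Finset.smul_sum, ← add_assoc,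
            ← Finset.sum_add_distrib]
          simp only [smul_smul, add_smul, mul_comm (σ t)]
      _ = ∑ i ∈ Finset.range (l + 1), a i • Φ^[i] v := by
          simp only [Finset.sum_range_succ', a_succ, a_zero]

lemma exists_mem_span_fixed_add_smul_eq (hσ : IsFrobeniusPower σ q) (Φ : V →ₛₗ[σ] V) (a : k)
    {w : V} (hw : w ∈ Submodule.span k {v | Φ v = v}) :
    ∃ u ∈ Submodule.span k {v | Φ v = v}, Φ u + a • u = w := by
  induction hw using Submodule.closure_induction with
  | zero => exact ⟨0, zero_mem _, by simp⟩
  | add x y _ _ hx hy =>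
    obtain ⟨⟨x, hx, rfl⟩, ⟨y, hy, rfl⟩⟩ := hx, hy
    exact ⟨x + y, add_mem hx hy, by rw [map_add, smul_add]; abel⟩
  | smul_mem c x hx =>
    obtain ⟨d, rfl⟩ := hσ.exists_apply_add_mul_eq a c
    exact ⟨d • x, Submodule.smul_mem _ _ (Submodule.subset_span hx),
      by rw [map_smulₛₗ, hx, add_smul, smul_smul]⟩

/-- Lang's theorem for `GL(V)`: fixed vectors lift from the quotient by their span, so that quotient
has none but zero. -/
theorem span_fixed_eq_top [FiniteDimensional k V] (hσ : IsFrobeniusPower σ q)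
    (hΦ : Function.Injective Φ) :
    Submodule.span k {v | Φ v = v} = ⊤ := by
  set W := Submodule.span k {v | Φ v = v}
  have stable : W ≤ W.comap Φ :=
    Submodule.span_le.2 fun v hv ↦ by
      simpa only [Submodule.comap_coe, Set.mem_preimage, SetLike.mem_coe, hv.out] using
        Submodule.subset_span hv
  have mapQ_injective : Function.Injective (W.mapQ W Φ stable) := by
    refine (injective_iff_map_eq_zero _).2 fun x hx ↦ ?_
    obtain ⟨v, rfl⟩ := W.mkQ_surjective x
    rw [Submodule.mkQ_apply, Submodule.mapQ_apply, Submodule.Quotient.mk_eq_zero] at hx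
    obtain ⟨u, hu, eq⟩ := hσ.exists_mem_span_fixed_add_smul_eq Φ 0 hx
    rw [zero_smul, add_zero] at eq
    simpa [← hΦ eq] using hu
  by_contra hW
  have : Nontrivial (V ⧸ W) := Submodule.Quotient.nontrivial_iff.2 hW
  obtain ⟨x, x_ne_zero, hx⟩ := hσ.exists_fixed_ne_zero mapQ_injective
  obtain ⟨v, rfl⟩ := W.mkQ_surjective x
  rw [Submodule.mkQ_apply, Submodule.mapQ_apply, Submodule.Quotient.eq] at hx
  obtain ⟨u, hu, eq⟩ := hσ.exists_mem_span_fixed_add_smul_eq Φ (-1) hx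
  have sub_fixed : v - u ∈ {v | Φ v = v} := by
    rw [Set.mem_ofPred_eq, map_sub, sub_eq_sub_iff_sub_eq_sub, ← eq, neg_one_smul, sub_eq_add_neg]
  refine x_ne_zero ((Submodule.Quotient.mk_eq_zero W).2 ?_)
  simpa using W.add_mem (Submodule.subset_span sub_fixed) hu

end IsFrobeniusPower

end Lang

section HermitianVectors

variable {k : Type*} [Field k] {σ : k →+* k} {V : Type*} [AddCommGroup V] [Module k V]

/-- Vectors on which the sesquilinear form `β` is Hermitian. For `σ` the `q`-power Frobenius these
are the `𝔽_{q²}`-rational points of the form. -/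
def IsHermitianVector (β : V →ₛₗ[σ] V →ₗ[k] k) (v : V) : Prop :=
  ∀ w, β w v = σ (β v w)

namespace IsHermitianVector

variable {β : V →ₛₗ[σ] V →ₗ[k] k} {v w : V}

lemma add (hv : IsHermitianVector β v) (hw : IsHermitianVector β w) :
    IsHermitianVector β (v + w) := fun u ↦ by
  rw [map_add, map_add, LinearMap.add_apply, map_add, hv, hw]

lemma smul (hv : IsHermitianVector β v) {x : k} (hx : σ (σ x) = x) :
    IsHermitianVector β (x • v) := fun u ↦ by
  rw [map_smul, map_smulₛₗ, LinearMap.smul_apply, smul_eq_mul, smul_eq_mul, map_mul, hx, hv]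

lemma sub (hv : IsHermitianVector β v) (hw : IsHermitianVector β w) :
    IsHermitianVector β (v - w) := fun u ↦ by
  rw [map_sub, map_sub, LinearMap.sub_apply, map_sub, hv, hw]

lemma apply_self_fixed (hv : IsHermitianVector β v) : σ (β v v) = β v v :=
  (hv v).symm

lemma apply_fixed (hv : IsHermitianVector β v) (hw : IsHermitianVector β w) :
    σ (σ (β v w)) = β v w := by
  rw [← hv w, ← hw v]

lemma apply_eq_zero_comm (hv : IsHermitianVector β v) : β v w = 0 ↔ β w v = 0 := by
  rw [hv w, map_eq_zero_iff σ σ.injective]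

end IsHermitianVector

/-- Since `β (x • y) = σ x • β y`, matching `β y (ψ x)` with `σ (β x y)` makes `ψ` semilinear over
`σ ∘ σ`. -/
lemma exists_apply_eq_map_apply [FiniteDimensional k V] {β : V →ₛₗ[σ] V →ₗ[k] k}
    (hβ : β.SeparatingRight) :
    ∃ ψ : V →ₛₗ[σ.comp σ] V, ∀ x y, β y (ψ x) = σ (β x y) := by
  set b := Module.finBasis k V
  have separates {u : V} (hu : ∀ i, β (b i) u = 0) : u = 0 := by
    have : β.flip u = 0 := b.ext hu
    exact hβ u fun y ↦ LinearMap.congr_fun this y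
  set F : V →ₗ[k] Fin (finrank k V) → k := LinearMap.pi fun i ↦ β (b i)
  have F_injective : Function.Injective F :=
    (injective_iff_map_eq_zero F).2 fun u hu ↦ separates (congrFun hu)
  have F_surjective : Function.Surjective F :=
    (LinearMap.injective_iff_surjective_of_finrank_eq_finrank (by simp)).1 F_injective
  choose ψ hψ using fun x ↦ F_surjective fun i ↦ σ (β x (b i))
  replace hψ (x : V) (i) : β (b i) (ψ x) = σ (β x (b i)) := congrFun (hψ x) i
  have ψ_unique {x u : V} (hu : ∀ i, β (b i) u = σ (β x (b i))) : ψ x = u :=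
    sub_eq_zero.1 <| separates fun i ↦ by rw [map_sub, hψ, hu, sub_self]
  refine ⟨⟨⟨ψ, fun x y ↦ ψ_unique fun i ↦ ?_⟩, fun c x ↦ ψ_unique fun i ↦ ?_⟩, fun x y ↦ ?_⟩
  · simp [hψ]
  · simp [hψ]
  · have : β.flip (ψ x) = σ.toSemilinearMap.comp (β x) := b.ext fun i ↦ hψ x i
    exact LinearMap.congr_fun this y

variable [IsAlgClosed k] [FiniteDimensional k V] {β : V →ₛₗ[σ] V →ₗ[k] k} {q : ℕ}

theorem span_isHermitianVector_eq_top (hσ : IsFrobeniusPower σ q) (hl : β.SeparatingLeft)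
    (hr : β.SeparatingRight) : Submodule.span k {v | IsHermitianVector β v} = ⊤ := by
  obtain ⟨ψ, hψ⟩ := exists_apply_eq_map_apply hr
  have ψ_injective : Function.Injective ψ := (injective_iff_map_eq_zero ψ).2 fun x hx ↦
    hl x fun y ↦ σ.injective <| by rw [← hψ, hx, map_zero, map_zero]
  refine top_le_iff.1 ((hσ.comp_self.span_fixed_eq_top ψ_injective).ge.trans
    (Submodule.span_mono fun v hv w ↦ ?_))
  rw [← hψ, hv.out]

end HermitianVectors

section HermitianSpaces

universe u v

variable {k : Type u} [Field k] {σ : k →+* k} {V : Type v} [AddCommGroup V] [Module k V]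

/-- `v` is a Hermitian vector whose Hermitian norm `β v v` is `c`. -/
structure IsHermitianOfNorm (β : V →ₛₗ[σ] V →ₗ[k] k) (c : k) (v : V) : Prop where
  isHermitianVector : IsHermitianVector β v
  apply_self : β v v = c

/-- `β` is the scalar extension to `k` of a nondegenerate Hermitian form, namely of its restriction
to the Hermitian vectors. -/
structure IsHermitianSpace (β : V →ₛₗ[σ] V →ₗ[k] k) : Prop where
  span_eq_top : Submodule.span k {v | IsHermitianVector β v} = ⊤
  separatingLeft : β.SeparatingLeft

variable {β : V →ₛₗ[σ] V →ₗ[k] k} {q : ℕ}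

namespace IsHermitianSpace

lemma exists_apply_self_ne_zero [IsAlgClosed k] [Nontrivial V] (hσ : IsFrobeniusPower σ q)
    (hβ : IsHermitianSpace β) : ∃ v, IsHermitianVector β v ∧ β v v ≠ 0 := by
  by_contra! isotropic
  have skew {v w : V} (hv : IsHermitianVector β v) (hw : IsHermitianVector β w) :
      β v w + σ (β v w) = 0 := by
    have := isotropic _ (hv.add hw)
    simpa [isotropic v hv, isotropic w hw, hv w, add_comm] using this
  have orthogonal {v w : V} (hv : IsHermitianVector β v) (hw : IsHermitianVector β w) :
      β v w = 0 := by
    by_contra hvw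
    obtain ⟨d, hd⟩ := hσ.exists_apply_add_mul_eq 1 1
    rw [one_mul] at hd
    have d_fixed : σ (σ d) = d := by
      rw [← sub_eq_iff_eq_add.2 hd.symm, map_sub, map_one, ← hd]
      ring
    have := skew hv (hw.smul (x := d / β v w)
      (by rw [map_div₀, map_div₀, d_fixed, hv.apply_fixed hw]))
    rw [map_smul, smul_eq_mul, div_mul_cancel₀ _ hvw, add_comm, hd] at this
    exact one_ne_zero this
  have β_eq_zero : β = 0 := LinearMap.ext_on hβ.span_eq_top fun v hv ↦
    LinearMap.ext_on hβ.span_eq_top fun w hw ↦ orthogonal hv hw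
  obtain ⟨v, hv⟩ := exists_ne (0 : V)
  exact hv (hβ.separatingLeft v fun w ↦ by rw [β_eq_zero]; rfl)

lemma exists_isHermitianOfNorm_one [IsAlgClosed k] [Nontrivial V] (hσ : IsFrobeniusPower σ q)
    (hβ : IsHermitianSpace β) : ∃ e, IsHermitianOfNorm β 1 e := by
  obtain ⟨v, hv, hvv⟩ := hβ.exists_apply_self_ne_zero hσ
  obtain ⟨x, hx⟩ := hσ.exists_mul_apply_eq (β v v)⁻¹
  refine ⟨x • v, hv.smul (map_map_eq_self_of_mul_map_eq hx ?_ (inv_ne_zero hvv)), ?_⟩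
  · rw [map_inv₀, hv.apply_self_fixed]
  · rw [map_smul, map_smulₛₗ, LinearMap.smul_apply, smul_smul, hx, smul_eq_mul,
      inv_mul_cancel₀ hvv]

end IsHermitianSpace

/-- The restriction of `β` to the orthogonal complement of `e`. -/
def orthogonalForm (β : V →ₛₗ[σ] V →ₗ[k] k) (e : V) :
    LinearMap.ker (β e) →ₛₗ[σ] LinearMap.ker (β e) →ₗ[k] k :=
  β.domRestrict₁₂ (LinearMap.ker (β e)) (LinearMap.ker (β e))

@[simp]
lemma orthogonalForm_apply (e : V) (v w : LinearMap.ker (β e)) :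
    orthogonalForm β e v w = β v w := rfl

namespace IsHermitianOfNorm

variable {e : V} (he : IsHermitianOfNorm β 1 e)

/-- The orthogonal projection `v ↦ v - β e v • e` onto the complement of a unit vector `e`. -/
def orthogonalProj : V →ₗ[k] LinearMap.ker (β e) :=
  (LinearMap.id - (β e).smulRight e).codRestrict _ fun v ↦ by simp [he.apply_self]

lemma coe_orthogonalProj (v : V) : (he.orthogonalProj v : V) = v - β e v • e := rfl

lemma orthogonalProj_coe (w : LinearMap.ker (β e)) : he.orthogonalProj w = w :=
  Subtype.ext <| by rw [coe_orthogonalProj, w.2, zero_smul, sub_zero]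

lemma orthogonalProj_self : he.orthogonalProj e = 0 :=
  Subtype.ext <| by simp [coe_orthogonalProj, he.apply_self]

include he

lemma apply_ker_eq_zero (v : LinearMap.ker (β e)) : β v e = 0 :=
  he.isHermitianVector.apply_eq_zero_comm.1 v.2

lemma apply_orthogonalProj (v : LinearMap.ker (β e)) (w : V) :
    β v (he.orthogonalProj w) = β v w := by
  rw [coe_orthogonalProj, map_sub, map_smul, he.apply_ker_eq_zero, smul_zero, sub_zero]

lemma isHermitianVector_orthogonalForm {v : LinearMap.ker (β e)} :
    IsHermitianVector (orthogonalForm β e) v ↔ IsHermitianVector β (v : V) := by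
  refine ⟨fun hv w ↦ ?_, fun hv w ↦ hv w⟩
  rw [← he.apply_orthogonalProj v w, ← orthogonalForm_apply, ← hv (he.orthogonalProj w),
    orthogonalForm_apply, coe_orthogonalProj, map_sub, LinearMap.sub_apply, map_smulₛₗ,
    LinearMap.smul_apply, v.2, smul_zero, sub_zero]

lemma isHermitianVector_orthogonalProj {v : V} (hv : IsHermitianVector β v) :
    IsHermitianVector (orthogonalForm β e) (he.orthogonalProj v) :=
  he.isHermitianVector_orthogonalForm.2 <|
    hv.sub (he.isHermitianVector.smul (he.isHermitianVector.apply_fixed hv))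

lemma isHermitianSpace_orthogonalForm (hβ : IsHermitianSpace β) :
    IsHermitianSpace (orthogonalForm β e) where
  span_eq_top := by
    have proj_surjective : Function.Surjective he.orthogonalProj := fun w ↦
      ⟨w, he.orthogonalProj_coe w⟩
    rw [eq_top_iff, ← LinearMap.range_eq_top.2 proj_surjective, LinearMap.range_eq_map,
      ← hβ.span_eq_top, Submodule.map_span, Submodule.span_le, Set.image_subset_iff]
    exact fun v hv ↦ Submodule.subset_span (he.isHermitianVector_orthogonalProj hv)
  separatingLeft v hv := Subtype.ext <| hβ.separatingLeft v fun w ↦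
    (he.apply_orthogonalProj v w).symm.trans (hv (he.orthogonalProj w))

lemma finrank_ker_add_one [FiniteDimensional k V] :
    finrank k (LinearMap.ker (β e)) + 1 = finrank k V :=
  Module.Dual.finrank_ker_add_one_of_ne_zero fun h ↦ by simpa [h] using he.apply_self

lemma isHermitianOfNorm_add_smul {c x : k} (hx : σ (σ x) = x) {w : LinearMap.ker (β e)}
    (hw : IsHermitianOfNorm (orthogonalForm β e) (c - x * σ x) w) :
    IsHermitianOfNorm β c (w + x • e) where
  isHermitianVector :=
    (he.isHermitianVector_orthogonalForm.1 hw.1).add (he.isHermitianVector.smul hx)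
  apply_self := by
    have apply_w : β w w = c - x * σ x := hw.apply_self
    have orthogonal : β e w = 0 := w.2
    simp only [map_add, map_smulₛₗ, LinearMap.add_apply, LinearMap.smul_apply, orthogonal, apply_w,
      he.apply_self, he.apply_ker_eq_zero, smul_eq_mul, RingHom.id_apply]
    ring

lemma isHermitianOfNorm_orthogonalProj {c : k} {v : V} (hv : IsHermitianOfNorm β c v) :
    IsHermitianOfNorm (orthogonalForm β e) (c - β e v * σ (β e v)) (he.orthogonalProj v) where
  isHermitianVector := he.isHermitianVector_orthogonalProj hv.isHermitianVector
  apply_self := by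
    rw [orthogonalForm_apply, he.apply_orthogonalProj, coe_orthogonalProj, map_sub,
      LinearMap.sub_apply, hv.apply_self, map_smulₛₗ, LinearMap.smul_apply, smul_eq_mul, mul_comm]

/-- Splitting a vector into its projections onto `e` and onto the complement of `e`. -/
def sphereEquiv (c : k) :
    {v // IsHermitianOfNorm β c v} ≃
      Σ x : {x // σ (σ x) = x}, {w // IsHermitianOfNorm (orthogonalForm β e) (c - x * σ x) w} where
  toFun v := ⟨⟨β e v, he.isHermitianVector.apply_fixed v.2.isHermitianVector⟩,
    he.orthogonalProj v, he.isHermitianOfNorm_orthogonalProj v.2⟩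
  invFun p := ⟨p.2 + (p.1 : k) • e, he.isHermitianOfNorm_add_smul p.1.2 p.2.2⟩
  left_inv v := Subtype.ext (sub_add_cancel _ _)
  right_inv := by
    rintro ⟨⟨x, hx⟩, ⟨w, hw⟩⟩
    have coeff : β e (w + x • e) = x := by simp [he.apply_self]
    have proj : he.orthogonalProj (w + x • e) = w := by
      rw [map_add, he.orthogonalProj_coe, map_smul, he.orthogonalProj_self, smul_zero, add_zero]
    exact Sigma.subtype_ext (Subtype.ext coeff) proj

end IsHermitianOfNorm

/-- `f` is an orthonormal family of Hermitian vectors. -/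
structure IsHermitianFrame {n : ℕ} (β : V →ₛₗ[σ] V →ₗ[k] k) (f : Fin n → V) : Prop where
  isHermitianVector (i : Fin n) : IsHermitianVector β (f i)
  apply (i j : Fin n) : β (f i) (f j) = if i = j then 1 else 0

namespace IsHermitianFrame

variable {n : ℕ}

lemma head {f : Fin (n + 1) → V} (hf : IsHermitianFrame β f) : IsHermitianOfNorm β 1 (f 0) :=
  ⟨hf.isHermitianVector 0, by simp [hf.apply]⟩

lemma succ_mem_ker {f : Fin (n + 1) → V} (hf : IsHermitianFrame β f) (i : Fin n) :
    f i.succ ∈ LinearMap.ker (β (f 0)) := by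
  simp [hf.apply, (Fin.succ_ne_zero i).symm]

lemma tail {f : Fin (n + 1) → V} (hf : IsHermitianFrame β f) :
    IsHermitianFrame (orthogonalForm β (f 0)) fun i : Fin n ↦ ⟨f i.succ, hf.succ_mem_ker i⟩ where
  isHermitianVector i := hf.head.isHermitianVector_orthogonalForm.2 (hf.isHermitianVector i.succ)
  apply i j := by simp [hf.apply]

lemma cons {e : V} (he : IsHermitianOfNorm β 1 e) {g : Fin n → LinearMap.ker (β e)}
    (hg : IsHermitianFrame (orthogonalForm β e) g) :
    IsHermitianFrame β (Fin.cons e fun i ↦ (g i : V) : Fin (n + 1) → V) where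
  isHermitianVector := Fin.cases he.isHermitianVector fun i ↦
    he.isHermitianVector_orthogonalForm.1 (hg.isHermitianVector i)
  apply := Fin.cases
    (Fin.cases (by simp [he.apply_self]) fun j ↦ by simp [(Fin.succ_ne_zero j).symm])
    fun i ↦ Fin.cases (by simp [he.apply_ker_eq_zero]) fun j ↦ by
      simpa using hg.apply i j

/-- A frame consists of a unit vector and a frame of its orthogonal complement. -/
def consEquiv (β : V →ₛₗ[σ] V →ₗ[k] k) (n : ℕ) :
    {f : Fin (n + 1) → V // IsHermitianFrame β f} ≃
      Σ e : {e // IsHermitianOfNorm β 1 e},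
        {g : Fin n → LinearMap.ker (β e) // IsHermitianFrame (orthogonalForm β e) g} where
  toFun f := ⟨⟨f.1 0, f.2.head⟩, _, f.2.tail⟩
  invFun p := ⟨_, cons p.1.2 p.2.2⟩
  left_inv f := Subtype.ext (Fin.cons_self_tail f.1)
  right_inv _ := rfl

end IsHermitianFrame

namespace IsFrobeniusPower

variable [IsAlgClosed k]

lemma finite_fixed_comp_self (hσ : IsFrobeniusPower σ q) : Finite {x // σ (σ x) = x} :=
  hσ.comp_self.finite_fixed.to_subtype

lemma card_fixed_comp_self (hσ : IsFrobeniusPower σ q) [Fintype {x // σ (σ x) = x}] :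
    Fintype.card {x // σ (σ x) = x} = q ^ 2 := by
  rw [← Nat.card_eq_fintype_card]
  exact hσ.comp_self.ncard_fixed

lemma ncard_fixed_mul_eq (hσ : IsFrobeniusPower σ q) [DecidableEq k] {c : k} (hc : σ c = c) :
    {x : {x // σ (σ x) = x} | x * σ x = c}.ncard = if c = 0 then 1 else q + 1 := by
  split_ifs with h
  · refine Set.ncard_eq_one.2 ⟨⟨0, by simp⟩, Set.ext fun x ↦ ?_⟩
    simp [h, Subtype.ext_iff]
  · have image : Subtype.val '' {x : {x // σ (σ x) = x} | x * σ x = c} = {x | x ^ (q + 1) = c} := by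
      ext x
      simpa [hσ.pow_succ_eq_mul] using fun hx ↦ map_map_eq_self_of_mul_map_eq hx hc h
    rw [← Set.ncard_image_of_injective _ Subtype.val_injective, image,
      ncard_setOf_pow_eq hσ.cast_succ_ne_zero h]

lemma sum_fixed_ite_mul_eq (hσ : IsFrobeniusPower σ q) [Fintype {x // σ (σ x) = x}]
    [DecidableEq k] {c : k} (hc : σ c = c) (a : ℤ) :
    ∑ x : {x // σ (σ x) = x}, (if x * σ x = c then a else 0) =
      (if c = 0 then 1 else q + 1 : ℕ) * a := by
  have card_filter := hσ.ncard_fixed_mul_eq hc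
  rw [Set.ncard_eq_toFinset_card', Set.toFinset_ofPred] at card_filter
  rw [← Finset.sum_filter, Finset.sum_const, card_filter]
  simp

end IsFrobeniusPower

lemma card_isHermitianOfNorm_of_subsingleton [Subsingleton V] [DecidableEq k] (c : k) :
    Nat.card {v // IsHermitianOfNorm β c v} = if c = 0 then 1 else 0 := by
  have isHermitianOfNorm_iff (v : V) : IsHermitianOfNorm β c v ↔ c = 0 := by
    rw [Subsingleton.elim v 0]
    exact ⟨fun h ↦ by simpa using h.apply_self.symm, fun h ↦ ⟨fun w ↦ by simp, by simp [h]⟩⟩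
  simp only [isHermitianOfNorm_iff]
  split_ifs with h <;> simp [h]

namespace IsHermitianSpace

variable [IsAlgClosed k] [FiniteDimensional k V]

lemma finite_isHermitianVector (hσ : IsFrobeniusPower σ q) (hβ : IsHermitianSpace β) :
    {v | IsHermitianVector β v}.Finite := by
  set b := Module.Basis.ofSpan hβ.span_eq_top.ge
  have hb (i) : IsHermitianVector β (b i) :=
    Module.Basis.ofSpan_subset hβ.span_eq_top.ge ⟨i, rfl⟩
  have : Finite _ := Module.Finite.finite_basis b
  refine Set.Finite.of_finite_image (f := fun v i ↦ β (b i) v)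
    ((Set.Finite.pi' fun _ ↦ hσ.comp_self.finite_fixed).subset ?_) fun v hv w hw h ↦ ?_
  · rintro _ ⟨v, hv, rfl⟩ i
    exact (hb i).apply_fixed hv
  · have : β.flip (v - w) = 0 := b.ext fun i ↦ by
      simpa [sub_eq_zero] using congrFun h i
    exact sub_eq_zero.1 <| hβ.separatingLeft _ fun u ↦
      (IsHermitianVector.sub hv hw).apply_eq_zero_comm.2 (LinearMap.congr_fun this u)

lemma finite_isHermitianOfNorm (hσ : IsFrobeniusPower σ q) (hβ : IsHermitianSpace β) (c : k) :
    Finite {v // IsHermitianOfNorm β c v} :=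
  ((hβ.finite_isHermitianVector hσ).subset fun _ hv ↦ hv.isHermitianVector).to_subtype

lemma finite_isHermitianFrame (hσ : IsFrobeniusPower σ q) (hβ : IsHermitianSpace β) (n : ℕ) :
    Finite {f : Fin n → V // IsHermitianFrame β f} :=
  ((Set.Finite.pi' fun _ ↦ hβ.finite_isHermitianVector hσ).subset
    fun _ hf ↦ hf.isHermitianVector).to_subtype

theorem card_isHermitianOfNorm (hσ : IsFrobeniusPower σ q) (hβ : IsHermitianSpace β) {n : ℕ}
    (hn : finrank k V = n) [DecidableEq k] {c : k} (hc : σ c = c) :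
    (q : ℤ) * Nat.card {v // IsHermitianOfNorm β c v} =
      q ^ (2 * n) + ((if c = 0 then (q : ℤ) else 0) - 1) * (-q) ^ n := by
  induction n generalizing V c with
  | zero =>
    have := finrank_zero_iff.1 hn
    rw [card_isHermitianOfNorm_of_subsingleton]
    split_ifs <;> simp
  | succ n ih =>
    have : Nontrivial V := nontrivial_of_finrank_pos (R := k) (by omega)
    obtain ⟨e, he⟩ := hβ.exists_isHermitianOfNorm_one hσ
    have hβ' := he.isHermitianSpace_orthogonalForm hβ
    have sub_fixed (x : {x // σ (σ x) = x}) : σ (c - x * σ x) = c - x * σ x := by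
      rw [map_sub, map_mul, x.2, hc, mul_comm]
    have := hσ.finite_fixed_comp_self
    have := Fintype.ofFinite {x // σ (σ x) = x}
    have := hβ'.finite_isHermitianOfNorm hσ
    calc (q : ℤ) * Nat.card {v // IsHermitianOfNorm β c v}
        = ∑ x : {x // σ (σ x) = x}, (q ^ (2 * n) +
            ((if x * σ x = c then (q : ℤ) else 0) - 1) * (-q) ^ n) := by
          rw [Nat.card_congr (he.sphereEquiv c), Nat.card_sigma, Nat.cast_sum, Finset.mul_sum]
          refine Finset.sum_congr rfl fun x _ ↦ ?_
          rw [ih hβ' (by have := he.finrank_ker_add_one; omega) (sub_fixed x)]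
          simp only [sub_eq_zero, eq_comm (a := c)]
      _ = q ^ 2 * q ^ (2 * n) + ((if c = 0 then 1 else q + 1 : ℕ) * q - q ^ 2) * (-q) ^ n := by
          rw [Finset.sum_add_distrib, ← Finset.sum_mul, Finset.sum_sub_distrib,
            hσ.sum_fixed_ite_mul_eq hc]
          simp [hσ.card_fixed_comp_self]
      _ = q ^ (2 * (n + 1)) + ((if c = 0 then (q : ℤ) else 0) - 1) * (-q) ^ (n + 1) := by
          split_ifs <;> push_cast <;> ring

theorem card_isHermitianFrame (hσ : IsFrobeniusPower σ q) (hβ : IsHermitianSpace β) {n : ℕ}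
    (hn : finrank k V = n) :
    (q : ℤ) ^ n * Nat.card {f : Fin n → V // IsHermitianFrame β f} =
      ∏ i ∈ Finset.range n, ((q : ℤ) ^ (2 * (i + 1)) - (-q) ^ (i + 1)) := by
  classical
  induction n generalizing V with
  | zero =>
    have isHermitianFrame (f : Fin 0 → V) : IsHermitianFrame β f := ⟨Fin.rec0, Fin.rec0⟩
    simp [isHermitianFrame]
  | succ n ih =>
    have := hβ.finite_isHermitianOfNorm hσ 1
    have := Fintype.ofFinite {e // IsHermitianOfNorm β 1 e}
    have (e : {e // IsHermitianOfNorm β 1 e}) :=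
      (e.2.isHermitianSpace_orthogonalForm hβ).finite_isHermitianFrame hσ n
    have card_sphere := hβ.card_isHermitianOfNorm hσ hn (map_one σ)
    have card_frames (e : {e // IsHermitianOfNorm β 1 e}) :=
      ih (e.2.isHermitianSpace_orthogonalForm hβ) (by have := e.2.finrank_ker_add_one; omega)
    rw [if_neg one_ne_zero, Nat.card_eq_fintype_card] at card_sphere
    rw [Nat.card_congr (IsHermitianFrame.consEquiv β n), Nat.card_sigma, Finset.prod_range_succ,
      Nat.cast_sum, pow_succ, mul_right_comm, Finset.mul_sum,
      Finset.sum_congr rfl fun e _ ↦ card_frames e, Finset.sum_const, Finset.card_univ,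
      nsmul_eq_mul]
    linear_combination
      (∏ i ∈ Finset.range n, ((q : ℤ) ^ (2 * (i + 1)) - (-q) ^ (i + 1))) * card_sphere

end IsHermitianSpace

end HermitianSpaces

section TotallyIsotropic

variable {k : Type*} [Field k] {σ : k →+* k} [IsAlgClosed k] {q : ℕ}
variable {V : Type*} [AddCommGroup V] [Module k V]
variable {β : V →ₛₗ[σ] V →ₗ[k] k} {L : Submodule k V}

lemma apply_eq_zero_of_forall_apply_self_eq_zero (hσ : IsFrobeniusPower σ q)
    (hL : ∀ v ∈ L, β v v = 0) {v w : V} (hv : v ∈ L) (hw : w ∈ L) : β v w = 0 := by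
  have polarization (c : k) : c * β v w + σ c * β w v = 0 := by
    have := hL _ (L.add_mem hv (L.smul_mem c hw))
    simpa [hL v hv, hL w hw] using this
  have polarization_one : β v w + β w v = 0 := by simpa using polarization 1
  obtain ⟨c, hc⟩ := hσ.exists_apply_add_mul_eq (-1) 1
  linear_combination σ c * polarization_one - polarization c - β v w * hc

variable [FiniteDimensional k V]

lemma mem_of_forall_apply_eq_zero (hσ : IsFrobeniusPower σ q) (hl : β.SeparatingLeft)
    (hL : ∀ v ∈ L, β v v = 0) (hfin : finrank k V = 2 * finrank k L) {u : V}
    (hu : ∀ v ∈ L, β v u = 0) : u ∈ L := by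
  set b := Module.finBasis k L
  set functionals := Submodule.span k (Set.range fun i ↦ β (b i))
  have mem_coannihilator {w : V} (hw : ∀ v ∈ L, β v w = 0) :
      w ∈ functionals.dualCoannihilator := by
    rw [Submodule.mem_dualCoannihilator]
    intro φ hφ
    induction hφ using Submodule.span_induction with
    | mem φ hφ => obtain ⟨i, rfl⟩ := hφ; exact hw _ (b i).2
    | zero => rfl
    | add φ χ _ _ hφ hχ => rw [LinearMap.add_apply, hφ, hχ, add_zero]
    | smul c φ _ hφ => rw [LinearMap.smul_apply, hφ, smul_zero]
  have independent : LinearIndependent k fun i ↦ β (b i) :=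
    (b.linearIndependent.map' L.subtype L.ker_subtype).map_of_surjective_injectiveₛ σ
      β.toAddMonoidHom hσ.surjective
      ((injective_iff_map_eq_zero β).2 fun v hv ↦ hl v fun w ↦ by rw [hv]; rfl) (map_smulₛₗ β)
  have finrank_functionals : finrank k functionals = finrank k L := by
    rw [finrank_span_eq_card independent, Fintype.card_fin]
  have L_eq : L = functionals.dualCoannihilator :=
    Submodule.eq_of_le_of_finrank_eq
      (fun w hw ↦ mem_coannihilator fun v hv ↦
        apply_eq_zero_of_forall_apply_self_eq_zero hσ hL hv hw)
      (by have := Subspace.finrank_add_finrank_dualCoannihilator_eq functionals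
          lia)
  exact L_eq ▸ mem_coannihilator hu

/-- `ψ` of `exists_apply_eq_map_apply` preserves `L = L^⊥`, so `L` is spanned by fixed vectors. -/
lemma span_isHermitianVector_eq_of_isotropic (hσ : IsFrobeniusPower σ q)
    (hl : β.SeparatingLeft) (hr : β.SeparatingRight) (hL : ∀ v ∈ L, β v v = 0)
    (hfin : finrank k V = 2 * finrank k L) :
    Submodule.span k {v | v ∈ L ∧ IsHermitianVector β v} = L := by
  obtain ⟨ψ, hψ⟩ := exists_apply_eq_map_apply hr
  have ψ_mem (v : L) : ψ v ∈ L := mem_of_forall_apply_eq_zero hσ hl hL hfin fun w hw ↦ by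
    rw [hψ, apply_eq_zero_of_forall_apply_self_eq_zero hσ hL v.2 hw, map_zero]
  set ψL : L →ₛₗ[σ.comp σ] L := (ψ.domRestrict L).codRestrict L ψ_mem
  have ψL_injective : Function.Injective ψL := (injective_iff_map_eq_zero ψL).2 fun v hv ↦
    Subtype.ext <| hl v fun y ↦ σ.injective <| by
      rw [← hψ, show ψ v = 0 from congrArg Subtype.val hv, map_zero, map_zero]
  refine le_antisymm (Submodule.span_le.2 fun v hv ↦ hv.1) ?_
  have := congrArg (Submodule.map L.subtype) (hσ.comp_self.span_fixed_eq_top ψL_injective)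
  rw [Submodule.map_span, Submodule.map_top, Submodule.range_subtype] at this
  refine this.ge.trans (Submodule.span_mono ?_)
  rintro _ ⟨v, hv, rfl⟩
  refine ⟨v.2, fun w ↦ ?_⟩
  rw [← hψ]
  exact congrArg (β w) (congrArg Subtype.val hv.out).symm

lemma finite_isotropic_subspaces (hσ : IsFrobeniusPower σ q) (hβ : IsHermitianSpace β)
    (hr : β.SeparatingRight) :
    {L : Submodule k V | finrank k V = 2 * finrank k L ∧ ∀ v ∈ L, β v v = 0}.Finite := by
  refine Set.Finite.of_finite_image (f := fun L ↦ {v | v ∈ L ∧ IsHermitianVector β v})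
    ((hβ.finite_isHermitianVector hσ).finite_subsets.subset ?_) ?_
  · rintro _ ⟨L, -, rfl⟩ v hv
    exact hv.2
  · rintro L ⟨hL, hL'⟩ M ⟨hM, hM'⟩ hLM
    rw [← span_isHermitianVector_eq_of_isotropic hσ hβ.separatingLeft hr hL' hL,
      ← span_isHermitianVector_eq_of_isotropic hσ hβ.separatingLeft hr hM' hM]
    exact congrArg _ hLM

end TotallyIsotropic

section Rulings

variable {k : Type*} [Field k] (b : Basis (Fin 4) k (Fin 4 → k)) {n : ℕ} {c c' s s' : k}

/-- Interchanges the coordinates `1` and `3`, and hence the two rulings of the quadrics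
`x₁x₃ = c x₀x₂`. -/
noncomputable def swapBasis : Basis (Fin 4) k (Fin 4 → k) :=
  b.reindex (Equiv.swap 1 3)

lemma swapBasis_swapBasis : swapBasis (swapBasis b) = b := by
  refine Basis.eq_of_apply_eq fun i ↦ ?_
  simp [swapBasis]

/-- The line `x₁ = s x₀`, `s x₃ = c x₂` in the coordinates of `b`. As `s` varies, these lines form
one of the two rulings of the quadric `x₁x₃ = c x₀x₂`. -/
noncomputable def rulingLine (c s : k) : Submodule k (Fin 4 → k) :=
  LinearMap.ker (b.coord 1 - s • b.coord 0) ⊓ LinearMap.ker (s • b.coord 3 - c • b.coord 2)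

variable {b} {v : Fin 4 → k}

lemma mem_rulingLine : v ∈ rulingLine b c s ↔
    b.repr v 1 = s * b.repr v 0 ∧ s * b.repr v 3 = c * b.repr v 2 := by
  simp [rulingLine, sub_eq_zero]

lemma mem_rulingLine_swapBasis : v ∈ rulingLine (swapBasis b) c s ↔
    b.repr v 3 = s * b.repr v 0 ∧ s * b.repr v 1 = c * b.repr v 2 := by
  simp [mem_rulingLine, swapBasis, Equiv.swap_apply_def]

lemma eq_zero_of_repr_eq_zero (h0 : b.repr v 0 = 0) (h1 : b.repr v 1 = 0) (h2 : b.repr v 2 = 0)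
    (h3 : b.repr v 3 = 0) : v = 0 :=
  b.forall_coord_eq_zero_iff.1 fun i ↦ by fin_cases i <;> assumption

lemma rulingLine_eq_span (hs : s ≠ 0) : rulingLine b c s =
    Submodule.span k (Set.range ![b 0 + s • b 1, s • b 2 + c • b 3]) := by
  refine le_antisymm (fun v hv ↦ ?_) (Submodule.span_le.2 ?_)
  · obtain ⟨h1, h3⟩ := mem_rulingLine.1 hv
    rw [Submodule.mem_span_range_iff_exists_fun]
    refine ⟨![b.repr v 0, b.repr v 2 / s], b.ext_elem fun i ↦ ?_⟩
    fin_cases i <;> simp [h1, mul_comm s, hs, eq_comm (a := _ * c)]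
    field_simp
    linear_combination h3
  · rintro _ ⟨i, rfl⟩
    fin_cases i <;> simp [mem_rulingLine, mul_comm]

lemma isLine_rulingLine (hs : s ≠ 0) : IsLine (rulingLine b c s) := by
  have independent : LinearIndependent k ![b 0 + s • b 1, s • b 2 + c • b 3] := by
    refine LinearIndependent.pair_iff.2 fun x y hxy ↦ ?_
    have coord_eq_zero (i : Fin 4) :
        b.repr (x • (b 0 + s • b 1) + y • (s • b 2 + c • b 3)) i = 0 := by
      rw [hxy, map_zero, Finsupp.zero_apply]
    exact ⟨by simpa using coord_eq_zero 0, by simpa [hs] using coord_eq_zero 2⟩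
  rw [IsLine, rulingLine_eq_span hs, finrank_span_eq_card independent, Fintype.card_fin]

lemma SkewLine.symm {L M : Submodule k (Fin 4 → k)} (h : SkewLine L M) : SkewLine M L := by
  rwa [SkewLine, inf_comm]

lemma SkewLine.ne_of_isLine {L M : Submodule k (Fin 4 → k)} (h : SkewLine L M) (hL : IsLine L) :
    L ≠ M := by
  rintro rfl
  rw [SkewLine, inf_idem] at h
  rw [IsLine, h, finrank_bot] at hL
  exact two_ne_zero hL.symm

lemma meetsLine_comm {L M : Submodule k (Fin 4 → k)} : MeetsLine L M ↔ MeetsLine M L := by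
  rw [MeetsLine, MeetsLine, inf_comm]

lemma meetsLine_of_mem {L M : Submodule k (Fin 4 → k)} (hL : v ∈ L) (hM : v ∈ M) (hv : v ≠ 0) :
    MeetsLine L M :=
  (Submodule.ne_bot_iff _).2 ⟨v, ⟨hL, hM⟩, hv⟩

lemma skewLine_rulingLine (hs : s ≠ 0) (hss : s ≠ s') (hcs : c * s' ≠ c' * s) :
    SkewLine (rulingLine b c s) (rulingLine b c' s') := by
  refine (Submodule.eq_bot_iff _).2 fun v ⟨hv, hv'⟩ ↦ ?_
  obtain ⟨h1, h3⟩ := mem_rulingLine.1 hv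
  obtain ⟨h1', h3'⟩ := mem_rulingLine.1 hv'
  have h0 : b.repr v 0 = 0 := by
    refine (mul_eq_zero.1 ?_).resolve_left (sub_ne_zero.2 hss)
    linear_combination h1' - h1
  have h2 : b.repr v 2 = 0 := by
    refine (mul_eq_zero.1 ?_).resolve_left (sub_ne_zero.2 hcs)
    linear_combination s * h3' - s' * h3
  exact eq_zero_of_repr_eq_zero h0 (by rw [h1, h0, mul_zero]) h2 (by simpa [h2, hs] using h3)

lemma skewLine_rulingLine_swapBasis (hcc : c ≠ c') (hs : s ≠ 0) (hs' : s' ≠ 0) :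
    SkewLine (rulingLine b c s) (rulingLine (swapBasis b) c' s') := by
  refine (Submodule.eq_bot_iff _).2 fun v ⟨hv, hv'⟩ ↦ ?_
  obtain ⟨h1, h3⟩ := mem_rulingLine.1 hv
  obtain ⟨h3', h1'⟩ := mem_rulingLine_swapBasis.1 hv'
  have h2 : b.repr v 2 = 0 := by
    refine (mul_eq_zero.1 ?_).resolve_left (sub_ne_zero.2 hcc)
    linear_combination h1' - h3 + s * h3' - s' * h1
  replace h3 : b.repr v 3 = 0 := by simpa [h2, hs] using h3
  replace h1' : b.repr v 1 = 0 := by simpa [h2, hs'] using h1'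
  exact eq_zero_of_repr_eq_zero (by simpa [h1', hs] using h1) h1' h2 h3

lemma meetsLine_rulingLine_of_eq (c c' s : k) :
    MeetsLine (rulingLine b c s) (rulingLine b c' s) := by
  refine meetsLine_of_mem (v := b 0 + s • b 1) ?_ ?_ fun h ↦ ?_
  · simp [mem_rulingLine]
  · simp [mem_rulingLine]
  · simpa using congrArg (b.repr · 0) h

lemma meetsLine_rulingLine_of_mul_eq (hs : s ≠ 0) (h : c * s' = c' * s) :
    MeetsLine (rulingLine b c s) (rulingLine b c' s') := by
  refine meetsLine_of_mem (v := s • b 2 + c • b 3) ?_ ?_ fun h ↦ hs ?_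
  · simp [mem_rulingLine, mul_comm]
  · simp [mem_rulingLine, ← h, mul_comm]
  · simpa using congrArg (b.repr · 2) h

lemma meetsLine_rulingLine_swapBasis (hc : c ≠ 0) :
    MeetsLine (rulingLine b c s) (rulingLine (swapBasis b) c s') := by
  refine meetsLine_of_mem
    (v := c • b 0 + (s * c) • b 1 + (s * s') • b 2 + (s' * c) • b 3) ?_ ?_ fun h ↦ hc ?_
  · simp [mem_rulingLine]
    ring
  · simp [mem_rulingLine_swapBasis]
    ring
  · simpa using congrArg (b.repr · 0) h

variable (b n c c')

/-- For `c ^ n = 1`, the lines of the ruling of `x₁x₃ = c x₀x₂` that lie on the Fermat surface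
`∑ xᵢⁿ = 0`. -/
def ruling : Set (Submodule k (Fin 4 → k)) :=
  rulingLine b c '' {s | s ^ n = -1}

/-- One half of the double `2n` attached to `b`, `c` and `c'`; the other one is
`halfDouble (swapBasis b) n c c'`. -/
def halfDouble : Set (Submodule k (Fin 4 → k)) :=
  ruling b n c ∪ ruling (swapBasis b) n c'

lemma halfDouble_swapBasis : halfDouble (swapBasis b) n c' c = halfDouble b n c c' := by
  rw [halfDouble, swapBasis_swapBasis, halfDouble, Set.union_comm]

variable {b n c c'}

lemma ne_zero_of_pow_eq {a : k} (hn : n ≠ 0) (ha : a ≠ 0) (hs : s ^ n = a) : s ≠ 0 := by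
  rintro rfl
  exact ha (hs ▸ zero_pow hn)

lemma ne_zero_of_cast_ne_zero (hn : (n : k) ≠ 0) : n ≠ 0 :=
  fun h ↦ hn (by rw [h, Nat.cast_zero])

lemma finite_ruling (hn : n ≠ 0) : (ruling b n c).Finite :=
  (finite_setOf_pow_eq hn _).image _

lemma isLine_of_mem_ruling (hn : n ≠ 0) {L : Submodule k (Fin 4 → k)} (hL : L ∈ ruling b n c) :
    IsLine L := by
  obtain ⟨s, hs, rfl⟩ := hL
  exact isLine_rulingLine (ne_zero_of_pow_eq hn (neg_ne_zero.2 one_ne_zero) hs)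

lemma isLine_of_mem_halfDouble (hn : n ≠ 0) {L : Submodule k (Fin 4 → k)}
    (hL : L ∈ halfDouble b n c c') : IsLine L :=
  hL.elim (isLine_of_mem_ruling hn) (isLine_of_mem_ruling hn)

lemma skewLine_of_mem_ruling (hn : n ≠ 0) (hc : c ≠ 0) {L M : Submodule k (Fin 4 → k)}
    (hL : L ∈ ruling b n c) (hM : M ∈ ruling b n c) (hLM : L ≠ M) : SkewLine L M := by
  obtain ⟨s, hs, rfl⟩ := hL
  obtain ⟨s', -, rfl⟩ := hM
  have hss : s ≠ s' := fun h ↦ hLM (by rw [h])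
  exact skewLine_rulingLine (ne_zero_of_pow_eq hn (neg_ne_zero.2 one_ne_zero) hs) hss
    fun h ↦ hss (mul_left_cancel₀ hc h).symm

lemma skewLine_of_mem_ruling_swapBasis (hn : n ≠ 0) (hcc : c ≠ c')
    {L M : Submodule k (Fin 4 → k)} (hL : L ∈ ruling b n c) (hM : M ∈ ruling (swapBasis b) n c') :
    SkewLine L M := by
  obtain ⟨s, hs, rfl⟩ := hL
  obtain ⟨s', hs', rfl⟩ := hM
  exact skewLine_rulingLine_swapBasis hcc
    (ne_zero_of_pow_eq hn (neg_ne_zero.2 one_ne_zero) hs)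
    (ne_zero_of_pow_eq hn (neg_ne_zero.2 one_ne_zero) hs')

lemma skewLine_of_mem_halfDouble (hn : n ≠ 0) (hc : c ≠ 0) (hc' : c' ≠ 0) (hcc : c ≠ c')
    {L M : Submodule k (Fin 4 → k)} (hL : L ∈ halfDouble b n c c') (hM : M ∈ halfDouble b n c c')
    (hLM : L ≠ M) : SkewLine L M := by
  rcases hL with hL | hL <;> rcases hM with hM | hM
  · exact skewLine_of_mem_ruling hn hc hL hM hLM
  · exact skewLine_of_mem_ruling_swapBasis hn hcc hL hM
  · exact (skewLine_of_mem_ruling_swapBasis hn hcc hM hL).symm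
  · exact skewLine_of_mem_ruling hn hc' hL hM hLM

lemma disjoint_ruling_swapBasis (hn : n ≠ 0) (hcc : c ≠ c') :
    Disjoint (ruling b n c) (ruling (swapBasis b) n c') :=
  Set.disjoint_left.2 fun _ hL hL' ↦
    (skewLine_of_mem_ruling_swapBasis hn hcc hL hL').ne_of_isLine (isLine_of_mem_ruling hn hL) rfl

lemma rulingLine_injOn (hn : n ≠ 0) (hc : c ≠ 0) :
    Set.InjOn (rulingLine b c) {s | s ^ n = -1} := by
  intro s hs s' _ h
  by_contra hss
  have hs0 : s ≠ 0 := ne_zero_of_pow_eq hn (neg_ne_zero.2 one_ne_zero) hs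
  exact (skewLine_rulingLine hs0 hss fun h ↦ hss (mul_left_cancel₀ hc h).symm).ne_of_isLine
    (isLine_rulingLine hs0) h

lemma setOf_mem_ruling_meetsLine (hc : c ^ n = 1) (hc' : c' ^ n = 1) (hc0 : c ≠ 0) (hs0 : s ≠ 0)
    (hs : s ^ n = -1) : {M ∈ ruling b n c' | MeetsLine (rulingLine b c s) M} =
      {rulingLine b c' s, rulingLine b c' (c' * s / c)} := by
  ext M
  simp only [Set.mem_sep_iff, Set.mem_insert_iff, Set.mem_singleton_iff]
  constructor
  · rintro ⟨⟨s', -, rfl⟩, hM⟩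
    by_contra! h
    refine hM (skewLine_rulingLine hs0 (fun hss ↦ h.1 (by rw [hss])) fun hcs ↦ h.2 ?_)
    rw [eq_div_of_mul_eq hc0 ((mul_comm _ _).trans hcs)]
  · rintro (rfl | rfl)
    · exact ⟨Set.mem_image_of_mem _ hs, meetsLine_rulingLine_of_eq c c' s⟩
    · refine ⟨Set.mem_image_of_mem _ ?_,
        meetsLine_rulingLine_of_mul_eq hs0 (mul_div_cancel₀ _ hc0)⟩
      rw [Set.mem_ofPred_eq, div_pow, mul_pow, hc, hc', hs, one_mul, div_one]

variable [IsAlgClosed k]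

lemma ncard_ruling (hn : (n : k) ≠ 0) (hc : c ≠ 0) : (ruling b n c).ncard = n := by
  rw [ruling, (rulingLine_injOn (ne_zero_of_cast_ne_zero hn) hc).ncard_image,
    ncard_setOf_pow_eq hn (neg_ne_zero.2 one_ne_zero)]

lemma ncard_halfDouble (hn : (n : k) ≠ 0) (hc : c ≠ 0) (hc' : c' ≠ 0) (hcc : c ≠ c') :
    (halfDouble b n c c').ncard = 2 * n := by
  have hn0 := ne_zero_of_cast_ne_zero hn
  rw [halfDouble, Set.ncard_union_eq (disjoint_ruling_swapBasis hn0 hcc) (finite_ruling hn0)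
    (finite_ruling hn0), ncard_ruling hn hc, ncard_ruling hn hc', two_mul]

lemma ncard_setOf_meetsLine_rulingLine (hn : (n : k) ≠ 0) (hc : c ^ n = 1) (hc' : c' ^ n = 1)
    (hcc : c ≠ c') (hs : s ^ n = -1) :
    {M ∈ halfDouble (swapBasis b) n c c' | MeetsLine (rulingLine b c s) M}.ncard = n + 2 := by
  have hn0 := ne_zero_of_cast_ne_zero hn
  have hc0 : c ≠ 0 := ne_zero_of_pow_eq hn0 one_ne_zero hc
  have hs0 : s ≠ 0 := ne_zero_of_pow_eq hn0 (neg_ne_zero.2 one_ne_zero) hs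
  have hss : s ≠ c' * s / c := fun h ↦ hcc <| mul_right_cancel₀ hs0 <| by
    rw [mul_comm c, (eq_div_iff hc0).1 h]
  have meets_swapBasis : {M ∈ ruling (swapBasis b) n c | MeetsLine (rulingLine b c s) M} =
      ruling (swapBasis b) n c := Set.sep_eq_self_iff_mem_true.2 <| by
    rintro _ ⟨s', -, rfl⟩
    exact meetsLine_rulingLine_swapBasis hc0
  have meets_union : {M ∈ halfDouble (swapBasis b) n c c' | MeetsLine (rulingLine b c s) M} =
      ruling (swapBasis b) n c ∪ {M ∈ ruling b n c' | MeetsLine (rulingLine b c s) M} := by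
    conv_rhs => rw [← meets_swapBasis]
    rw [halfDouble, swapBasis_swapBasis]
    exact Set.ext fun M ↦ or_and_right
  have disjoint : Disjoint (ruling (swapBasis b) n c)
      {M ∈ ruling b n c' | MeetsLine (rulingLine b c s) M} :=
    (disjoint_ruling_swapBasis hn0 hcc.symm).symm.mono_right (Set.sep_subset _ _)
  rw [meets_union, Set.ncard_union_eq disjoint (finite_ruling hn0)
    ((finite_ruling hn0).subset (Set.sep_subset _ _)), ncard_ruling hn hc0,
    setOf_mem_ruling_meetsLine hc hc' hc0 hs0 hs, Set.ncard_pair]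
  refine fun h ↦ hss (rulingLine_injOn hn0 ?_ hs ?_ h)
  · exact ne_zero_of_pow_eq hn0 one_ne_zero hc'
  · rw [Set.mem_ofPred_eq, div_pow, mul_pow, hc, hc', hs, one_mul, div_one]

lemma ncard_setOf_meetsLine_halfDouble (hn : (n : k) ≠ 0) (hc : c ^ n = 1) (hc' : c' ^ n = 1)
    (hcc : c ≠ c') {L : Submodule k (Fin 4 → k)} (hL : L ∈ halfDouble b n c c') :
    {M ∈ halfDouble (swapBasis b) n c c' | MeetsLine L M}.ncard = n + 2 := by
  rcases hL with ⟨s, hs, rfl⟩ | ⟨s, hs, rfl⟩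
  · exact ncard_setOf_meetsLine_rulingLine hn hc hc' hcc hs
  · have := ncard_setOf_meetsLine_rulingLine (b := swapBasis b) hn hc' hc hcc.symm hs
    rwa [halfDouble_swapBasis] at this

theorem isDoubleTwoD_halfDouble (hn : (n : k) ≠ 0) (hc : c ^ n = 1) (hc' : c' ^ n = 1)
    (hcc : c ≠ c') : IsDoubleTwoD n (halfDouble b n c c') (halfDouble (swapBasis b) n c c') := by
  have hn0 := ne_zero_of_cast_ne_zero hn
  have hc0 : c ≠ 0 := ne_zero_of_pow_eq hn0 one_ne_zero hc
  have hc0' : c' ≠ 0 := ne_zero_of_pow_eq hn0 one_ne_zero hc'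
  refine ⟨ncard_halfDouble hn hc0 hc0' hcc, ncard_halfDouble hn hc0 hc0' hcc,
    fun _ ↦ isLine_of_mem_halfDouble hn0, fun _ ↦ isLine_of_mem_halfDouble hn0,
    fun _ hL _ ↦ skewLine_of_mem_halfDouble hn0 hc0 hc0' hcc hL,
    fun _ hL _ ↦ skewLine_of_mem_halfDouble hn0 hc0 hc0' hcc hL,
    fun _ ↦ ncard_setOf_meetsLine_halfDouble hn hc hc' hcc, fun M hM ↦ ?_⟩
  have := ncard_setOf_meetsLine_halfDouble hn hc hc' hcc hM
  rw [swapBasis_swapBasis] at this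
  simpa only [meetsLine_comm] using this

end Rulings

section RulingQuadrics

variable {k : Type*} [Field k] {b b' : Basis (Fin 4) k (Fin 4 → k)} {n : ℕ}
variable {c c' d d' s : k} {v : Fin 4 → k}

lemma sum_repr_pow_eq_zero_of_mem_ruling (hc : c ^ n = 1) {L : Submodule k (Fin 4 → k)}
    (hL : L ∈ ruling b n c) (hv : v ∈ L) : ∑ i, b.repr v i ^ n = 0 := by
  obtain ⟨s, hs, rfl⟩ := hL
  obtain ⟨h1, h3⟩ := mem_rulingLine.1 hv
  have h1n : b.repr v 1 ^ n = -b.repr v 0 ^ n := by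
    rw [h1, mul_pow, hs.out, neg_one_mul]
  have h3n : -b.repr v 3 ^ n = b.repr v 2 ^ n := by
    simpa [mul_pow, hs.out, hc] using congrArg (· ^ n) h3
  rw [Fin.sum_univ_four, h1n, ← h3n]
  ring

lemma sum_repr_pow_eq_zero_of_mem_halfDouble (hc : c ^ n = 1) (hc' : c' ^ n = 1)
    {L : Submodule k (Fin 4 → k)} (hL : L ∈ halfDouble b n c c') (hv : v ∈ L) :
    ∑ i, b.repr v i ^ n = 0 := by
  rcases hL with hL | hL
  · exact sum_repr_pow_eq_zero_of_mem_ruling hc hL hv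
  · rw [← sum_repr_pow_eq_zero_of_mem_ruling hc' hL hv,
      ← Equiv.sum_comp (Equiv.swap (1 : Fin 4) 3) fun i ↦ b.repr v i ^ n]
    simp [swapBasis]

/-- The quadric `x₁x₃ = c x₀x₂` ruled by the lines `rulingLine b c s`. -/
noncomputable def rulingQuadric (b : Basis (Fin 4) k (Fin 4 → k)) (c : k) :
    QuadraticForm k (Fin 4 → k) :=
  QuadraticMap.linMulLin (b.coord 1) (b.coord 3) -
    c • QuadraticMap.linMulLin (b.coord 0) (b.coord 2)

lemma rulingQuadric_apply (b : Basis (Fin 4) k (Fin 4 → k)) (c : k) (v : Fin 4 → k) :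
    rulingQuadric b c v = b.repr v 1 * b.repr v 3 - c * (b.repr v 0 * b.repr v 2) := by
  simp [rulingQuadric]

lemma rulingQuadric_swapBasis : rulingQuadric (swapBasis b) c = rulingQuadric b c := by
  ext v
  simp [rulingQuadric_apply, swapBasis, Equiv.swap_apply_def, mul_comm]

lemma rulingQuadric_eq_zero_of_mem (hv : v ∈ rulingLine b c s) : rulingQuadric b c v = 0 := by
  obtain ⟨h1, h3⟩ := mem_rulingLine.1 hv
  rw [rulingQuadric_apply]
  linear_combination b.repr v 3 * h1 + b.repr v 0 * h3

lemma rulingQuadric_eq_zero_of_mem_halfDouble {L : Submodule k (Fin 4 → k)}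
    (hL : L ∈ halfDouble b n c c') :
    (∀ v ∈ L, rulingQuadric b c v = 0) ∨ ∀ v ∈ L, rulingQuadric b c' v = 0 := by
  rcases hL with ⟨s, -, rfl⟩ | ⟨s, -, rfl⟩
  · exact .inl fun v ↦ rulingQuadric_eq_zero_of_mem
  · exact .inr fun v hv ↦ rulingQuadric_swapBasis (b := b) ▸ rulingQuadric_eq_zero_of_mem hv

lemma coeff_eq_zero_of_three_roots {s : Fin 3 → k} (hs : Function.Injective s) {x y z : k}
    (h : ∀ i, x + s i * y + s i ^ 2 * z = 0) : x = 0 ∧ y = 0 ∧ z = 0 := by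
  have := Matrix.eq_zero_of_forall_index_sum_pow_mul_eq_zero (v := ![x, y, z]) hs
    fun i ↦ by simpa [Fin.sum_univ_three] using h i
  exact ⟨congrFun this 0, congrFun this 1, congrFun this 2⟩

open QuadraticMap in
lemma quadraticForm_apply_sum_four {V : Type*} [AddCommGroup V] [Module k V]
    (G : QuadraticForm k V) (e : Fin 4 → V) (x y z w : k) :
    G ((x • e 0 + y • e 1) + (z • e 2 + w • e 3)) =
      x * x * G (e 0) + y * y * G (e 1) + z * z * G (e 2) + w * w * G (e 3) +
      x * y * polar G (e 0) (e 1) + z * w * polar G (e 2) (e 3) +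
      x * z * polar G (e 0) (e 2) + x * w * polar G (e 0) (e 3) +
      y * z * polar G (e 1) (e 2) + y * w * polar G (e 1) (e 3) := by
  simp only [QuadraticMap.map_add G, QuadraticMap.map_smul, polar_add_left,
    polar_add_right, polar_smul_left, polar_smul_right, smul_eq_mul]
  ring

lemma quadraticForm_eq_smul_rulingQuadric {G : QuadraticForm k (Fin 4 → k)} {s : Fin 3 → k}
    (hs : Function.Injective s) (hc : c ≠ 0) (hG : ∀ i, ∀ v ∈ rulingLine b c (s i), G v = 0) :
    G = QuadraticMap.polar G (b 1) (b 3) • rulingQuadric b c := by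
  have G_point (i) (x y : k) :
      G (x • (b 0 + s i • b 1) + y • (s i • b 2 + c • b 3)) = 0 := by
    refine hG i _ (mem_rulingLine.2 ?_)
    constructor <;> simp <;> ring
  have expand_point (i) (x y : k) := quadraticForm_apply_sum_four G b x (x * s i) (y * s i) (y * c)
  simp only [mul_smul, ← smul_add, G_point] at expand_point
  obtain ⟨h00, h01, h11⟩ := coeff_eq_zero_of_three_roots hs
    (x := G (b 0)) (y := QuadraticMap.polar G (b 0) (b 1)) (z := G (b 1))
    fun i ↦ by linear_combination - expand_point i 1 0
  obtain ⟨h33, h23, h22⟩ := coeff_eq_zero_of_three_roots hs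
    (x := c * c * G (b 3)) (y := c * QuadraticMap.polar G (b 2) (b 3)) (z := G (b 2))
    fun i ↦ by linear_combination - expand_point i 0 1
  obtain ⟨h03, h02, h12⟩ := coeff_eq_zero_of_three_roots hs
    (x := c * QuadraticMap.polar G (b 0) (b 3))
    (y := QuadraticMap.polar G (b 0) (b 2) + c * QuadraticMap.polar G (b 1) (b 3))
    (z := QuadraticMap.polar G (b 1) (b 2))
    fun i ↦ by
      linear_combination expand_point i 1 0 + expand_point i 0 1 - expand_point i 1 1
  replace h33 := (mul_eq_zero.1 h33).resolve_left (mul_ne_zero hc hc)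
  replace h23 := (mul_eq_zero.1 h23).resolve_left hc
  replace h03 := (mul_eq_zero.1 h03).resolve_left hc
  ext v
  have v_eq : v =
      (b.repr v 0 • b 0 + b.repr v 1 • b 1) + (b.repr v 2 • b 2 + b.repr v 3 • b 3) := by
    conv_lhs => rw [← b.sum_repr v, Fin.sum_univ_four, add_assoc (_ + _)]
  conv_lhs => rw [v_eq, quadraticForm_apply_sum_four, h00, h01, h11, h33, h23, h22, h03, h12,
    eq_neg_of_add_eq_zero_left h02]
  rw [smul_apply, rulingQuadric_apply, smul_eq_mul]
  ring

lemma exists_rulingQuadric_eq_smul (hn : 5 ≤ {s : k | s ^ n = -1}.ncard) (hc : c ≠ 0)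
    (h : ruling b n c ⊆ halfDouble b' n d d') :
    ∃ d₁ l : k, rulingQuadric b' d₁ = l • rulingQuadric b c := by
  have finite : {s : k | s ^ n = -1}.Finite := Set.finite_of_ncard_pos (by lia)
  let T (d₁ : k) := {s | s ^ n = -1 ∧ ∀ v ∈ rulingLine b c s, rulingQuadric b' d₁ v = 0}
  have T_finite (d₁ : k) : (T d₁).Finite := finite.subset fun _ hs ↦ hs.1
  have subset_union : {s : k | s ^ n = -1} ⊆ T d ∪ T d' := fun s hs ↦
    (rulingQuadric_eq_zero_of_mem_halfDouble (h (Set.mem_image_of_mem _ hs))).imp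
      (fun hd ↦ ⟨hs, hd⟩) fun hd ↦ ⟨hs, hd⟩
  have eq_smul {d₁ : k} (hT : 2 < (T d₁).ncard) :
      ∃ l : k, rulingQuadric b' d₁ = l • rulingQuadric b c := by
    obtain ⟨s₀, h₀, s₁, h₁, s₂, h₂, h₀₁, h₀₂, h₁₂⟩ := (Set.two_lt_ncard (T_finite d₁)).1 hT
    refine ⟨_, quadraticForm_eq_smul_rulingQuadric (s := ![s₀, s₁, s₂]) ?_ hc ?_⟩
    · simp [Function.Injective, Fin.forall_fin_succ, h₀₁, h₀₂, h₁₂, h₀₁.symm, h₀₂.symm, h₁₂.symm]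
    · exact Fin.forall_fin_succ.2 ⟨h₀.2, Fin.forall_fin_two.2 ⟨h₁.2, h₂.2⟩⟩
  have : 5 ≤ (T d).ncard + (T d').ncard := hn.trans <|
    (Set.ncard_le_ncard subset_union ((T_finite d).union (T_finite d'))).trans
      (Set.ncard_union_le _ _)
  rcases lt_or_ge 2 (T d).ncard with hT | hT
  · exact ⟨d, eq_smul hT⟩
  · exact ⟨d', eq_smul (by lia)⟩

lemma ne_of_rulingQuadric_eq_smul {d₀ d₁ l m : k} (hcc : c ≠ c')
    (hl : rulingQuadric b' d₀ = l • rulingQuadric b c)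
    (hm : rulingQuadric b' d₁ = m • rulingQuadric b c') : d₀ ≠ d₁ := by
  rintro rfl
  have l_eq : l = m := by
    simpa [hl, rulingQuadric_apply] using congr($hm (b 1 + b 3))
  have l_ne_zero : l ≠ 0 := by
    rintro rfl
    simpa [rulingQuadric_apply] using congr($hl (b' 1 + b' 3))
  have l_mul_eq : l * c = m * c' := by
    simpa [hl, rulingQuadric_apply] using congr($hm (b 0 + b 2))
  exact hcc (mul_left_cancel₀ l_ne_zero (l_eq ▸ l_mul_eq))

/-- Both pairs of products of opposite coordinates span the same pencil of quadrics, so their common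
zeros are the same four lines. -/
lemma repr_mul_repr_eq_zero_of_halfDouble_eq (hn : 5 ≤ {s : k | s ^ n = -1}.ncard) (hc : c ≠ 0)
    (hc' : c' ≠ 0) (hcc : c ≠ c') (h : halfDouble b n c c' = halfDouble b' n d d')
    (h₀₂ : b.repr v 0 * b.repr v 2 = 0) (h₁₃ : b.repr v 1 * b.repr v 3 = 0) :
    b'.repr v 0 * b'.repr v 2 = 0 ∧ b'.repr v 1 * b'.repr v 3 = 0 := by
  obtain ⟨d₀, l, hl⟩ := exists_rulingQuadric_eq_smul hn hc
    (Set.subset_union_left.trans h.subset)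
  obtain ⟨d₁, m, hm⟩ := exists_rulingQuadric_eq_smul hn hc'
    (Set.subset_union_right.trans h.subset)
  rw [rulingQuadric_swapBasis] at hm
  have h₀ : rulingQuadric b' d₀ v = 0 := by
    rw [hl, smul_apply, rulingQuadric_apply, h₀₂, h₁₃, mul_zero, sub_zero, smul_zero]
  have h₁ : rulingQuadric b' d₁ v = 0 := by
    rw [hm, smul_apply, rulingQuadric_apply, h₀₂, h₁₃, mul_zero, sub_zero, smul_zero]
  rw [rulingQuadric_apply] at h₀ h₁
  have h₀₂' : b'.repr v 0 * b'.repr v 2 = 0 := by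
    refine (mul_eq_zero.1 ?_).resolve_left
      (sub_ne_zero.2 (ne_of_rulingQuadric_eq_smul hcc hl hm))
    linear_combination h₁ - h₀
  exact ⟨h₀₂', by linear_combination h₀ + d₀ * h₀₂'⟩

lemma eq_zero_of_cyclic_mul_eq_zero {x y : Fin 4 → k} (hxy : ∀ i, x i * y i = 0)
    (hxy_succ : ∀ i, x i * y (i + 1) + x (i + 1) * y i = 0) {j : Fin 4} (hj : x j ≠ 0) :
    ∀ i ≠ j + 2, y i = 0 := by
  have hy : y j = 0 := (mul_eq_zero.1 (hxy j)).resolve_left hj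
  have hy_succ : y (j + 1) = 0 := by simpa [hy, hj] using hxy_succ j
  have hy_pred : y (j + 3) = 0 := by
    have := hxy_succ (j + 3)
    rw [show j + 3 + 1 = j by grind, hy] at this
    simpa [hj] using this
  have eq_or : ∀ i j : Fin 4, i ≠ j + 2 → i = j ∨ i = j + 1 ∨ i = j + 3 := by decide
  intro i hi
  rcases eq_or i j hi with rfl | rfl | rfl <;> assumption

lemma exists_support_of_cyclic_mul_eq_zero {x y : Fin 4 → k} (hx : x ≠ 0) (hy : y ≠ 0)
    (hxy : ∀ i, x i * y i = 0) (hxy_succ : ∀ i, x i * y (i + 1) + x (i + 1) * y i = 0) :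
    ∃ j, (∀ i ≠ j, x i = 0) ∧ ∀ i ≠ j + 2, y i = 0 := by
  obtain ⟨j, hj⟩ := Function.ne_iff.1 hx
  have y_eq_zero := eq_zero_of_cyclic_mul_eq_zero hxy hxy_succ hj
  have y_ne_zero : y (j + 2) ≠ 0 := fun h ↦ hy <| funext fun i ↦ by
    rcases eq_or_ne i (j + 2) with rfl | hi
    exacts [h, y_eq_zero i hi]
  have x_eq_zero := eq_zero_of_cyclic_mul_eq_zero (x := y) (y := x)
    (fun i ↦ by rw [mul_comm, hxy]) (fun i ↦ by rw [← hxy_succ i]; ring) y_ne_zero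
  rw [add_assoc, show (2 + 2 : Fin 4) = 0 from rfl, add_zero] at x_eq_zero
  exact ⟨j, x_eq_zero, y_eq_zero⟩

lemma exists_support_of_repr_mul_repr_eq_zero (m m' : Fin 4)
    (h : ∀ v, b.repr v 0 * b.repr v 2 = 0 → b.repr v 1 * b.repr v 3 = 0 →
      b'.repr v m * b'.repr v m' = 0) :
    ∃ j, (∀ i ≠ j, b'.repr (b i) m = 0) ∧ ∀ i ≠ j + 2, b'.repr (b i) m' = 0 := by
  have coord_ne_zero (m : Fin 4) : (fun i ↦ b'.repr (b i) m) ≠ 0 := fun hm ↦ by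
    have : b'.coord m = 0 := b.ext fun i ↦ congrFun hm i
    simpa using LinearMap.congr_fun this (b' m)
  have mul_eq_zero (i : Fin 4) : b'.repr (b i) m * b'.repr (b i) m' = 0 :=
    h _ (by fin_cases i <;> simp) (by fin_cases i <;> simp)
  refine exists_support_of_cyclic_mul_eq_zero (coord_ne_zero m) (coord_ne_zero m') mul_eq_zero
    fun i ↦ ?_
  have := h (b i + b (i + 1)) (by fin_cases i <;> simp) (by fin_cases i <;> simp)
  rw [map_add, Finsupp.add_apply, Finsupp.add_apply] at this
  linear_combination this - mul_eq_zero i - mul_eq_zero (i + 1)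

/-- `![j₀, j₁, j₀ + 2, j₁ + 2]`: the form of a permutation that preserves the pairs `{0, 2}` and
`{1, 3}` of opposite indices. -/
def oppositePairsMap (j₀ j₁ : Fin 4) : Fin 4 → Fin 4 :=
  ![j₀, j₁, j₀ + 2, j₁ + 2]

theorem exists_repr_eq_zero_of_halfDouble_eq (hn : 5 ≤ {s : k | s ^ n = -1}.ncard) (hc : c ≠ 0)
    (hc' : c' ≠ 0) (hcc : c ≠ c') (h : halfDouble b n c c' = halfDouble b' n d d') :
    ∃ j₀ j₁, ∀ m, ∀ i ≠ oppositePairsMap j₀ j₁ m, b'.repr (b i) m = 0 := by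
  obtain ⟨j₀, h₀, h₂⟩ := exists_support_of_repr_mul_repr_eq_zero 0 2 fun v h₀₂ h₁₃ ↦
    (repr_mul_repr_eq_zero_of_halfDouble_eq hn hc hc' hcc h h₀₂ h₁₃).1
  obtain ⟨j₁, h₁, h₃⟩ := exists_support_of_repr_mul_repr_eq_zero 1 3 fun v h₀₂ h₁₃ ↦
    (repr_mul_repr_eq_zero_of_halfDouble_eq hn hc hc' hcc h h₀₂ h₁₃).2
  refine ⟨j₀, j₁, Fin.forall_fin_succ.2 ⟨h₀, Fin.forall_fin_succ.2 ⟨h₁, ?_⟩⟩⟩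
  exact Fin.forall_fin_two.2 ⟨h₂, h₃⟩

lemma eq_of_halfDouble_eq (hn : n ≠ 0) (hs : s ^ n = -1)
    (h : halfDouble b n c c' = halfDouble b n d d') : c = d := by
  have hs0 : s ≠ 0 := ne_zero_of_pow_eq hn (neg_ne_zero.2 one_ne_zero) hs
  have h₀₁ : b 0 + s • b 1 ∈ rulingLine b c s := by simp [mem_rulingLine]
  have h₂₃ : s • b 2 + c • b 3 ∈ rulingLine b c s := by simp [mem_rulingLine, mul_comm]
  have hmem : rulingLine b c s ∈ halfDouble b n d d' := h ▸ .inl (Set.mem_image_of_mem _ hs)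
  rcases hmem with ⟨t, ht, h⟩ | ⟨t, ht, h⟩
  · rw [← h, mem_rulingLine] at h₀₁ h₂₃
    obtain rfl : s = t := by simpa using h₀₁
    exact mul_left_cancel₀ hs0 (by simpa [mul_comm d] using h₂₃)
  · have ht0 : t ≠ 0 := ne_zero_of_pow_eq hn (neg_ne_zero.2 one_ne_zero) ht
    rw [← h, mem_rulingLine_swapBasis] at h₀₁
    simp [ht0.symm] at h₀₁

lemma eq_and_eq_of_halfDouble_eq (hn : n ≠ 0) (hs : s ^ n = -1)
    (h : halfDouble b n c c' = halfDouble b n d d') : c = d ∧ c' = d' := by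
  refine ⟨eq_of_halfDouble_eq hn hs h, eq_of_halfDouble_eq (b := swapBasis b) hn hs (c' := c)
    (d' := d) ?_⟩
  rw [halfDouble_swapBasis, halfDouble_swapBasis, h]

end RulingQuadrics

namespace IsHermitianFrame

variable {k : Type*} [Field k] {σ : k →+* k} {V : Type*} [AddCommGroup V] [Module k V]
variable {β : V →ₛₗ[σ] V →ₗ[k] k} {q n : ℕ} {f g : Fin n → V}

lemma linearIndependent (hf : IsHermitianFrame β f) : LinearIndependent k f :=
  Fintype.linearIndependent_iff.2 fun x hx i ↦ by
    simpa [hf.apply] using congrArg (β (f i)) hx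

variable [FiniteDimensional k V]

/-- A frame with as many vectors as the dimension, as a basis. -/
noncomputable def basis (hf : IsHermitianFrame β f) (hn : finrank k V = n) : Basis (Fin n) k V :=
  Basis.mk hf.linearIndependent
    (hf.linearIndependent.span_eq_top_of_card_eq_finrank' (by rw [Fintype.card_fin, hn])).ge

@[simp]
lemma basis_apply (hf : IsHermitianFrame β f) (hn : finrank k V = n) (i : Fin n) :
    hf.basis hn i = f i :=
  Basis.mk_apply _ _ i

lemma basis_repr (hf : IsHermitianFrame β f) (hn : finrank k V = n) (v : V) (i : Fin n) :
    (hf.basis hn).repr v i = β (f i) v := by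
  conv_rhs => rw [← (hf.basis hn).sum_repr v]
  simp [hf.apply]

lemma apply_self_eq_sum (hσ : IsFrobeniusPower σ q) (hf : IsHermitianFrame β f)
    (hn : finrank k V = n) (v : V) : β v v = ∑ i, (hf.basis hn).repr v i ^ (q + 1) := by
  nth_rw 1 [← (hf.basis hn).sum_repr v]
  simp only [map_sum, map_smulₛₗ, LinearMap.sum_apply, LinearMap.smul_apply, basis_apply,
    smul_eq_mul, hσ.pow_succ_eq_mul, mul_comm (σ _), hf.basis_repr]

lemma exists_pow_eq_one_and_eq_smul (hσ : IsFrobeniusPower σ q) (hn : finrank k V = n)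
    (hf : IsHermitianFrame β f) (hg : IsHermitianFrame β g) {i m : Fin n}
    (h : ∀ j ≠ i, (hg.basis hn).repr (f j) m = 0) : ∃ c : k, c ^ (q + 1) = 1 ∧ g m = c • f i := by
  have orthogonal {j : Fin n} (hj : j ≠ i) : β (f j) (g m) = 0 :=
    (hf.isHermitianVector j).apply_eq_zero_comm.2 ((hg.basis_repr hn (f j) m).symm.trans (h j hj))
  have g_eq : g m = β (f i) (g m) • f i := by
    nth_rw 1 [← (hf.basis hn).sum_repr (g m)]
    rw [Finset.sum_eq_single i (fun j _ hj ↦ ?_) (by simp), hf.basis_repr, hf.basis_apply]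
    rw [hf.basis_repr, orthogonal hj, zero_smul]
  refine ⟨_, ?_, g_eq⟩
  have := hg.apply m m
  rw [g_eq, map_smul, map_smulₛₗ, LinearMap.smul_apply, hf.apply] at this
  simpa [hσ.pow_succ_eq_mul] using this

end IsHermitianFrame

section Counting

lemma card_le_mul_card_of_ncard_fiber_le {α β : Type*} [Finite α] [Finite β] (F : α → β) {m : ℕ}
    (hF : ∀ a, {a' | F a' = F a}.ncard ≤ m) : Nat.card α ≤ m * Nat.card β := by
  classical
  have := Fintype.ofFinite α
  have := Fintype.ofFinite β
  rw [Nat.card_eq_fintype_card, Nat.card_eq_fintype_card]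
  refine Finset.card_le_mul_card_image_of_maps_to (f := F) (fun _ _ ↦ Finset.mem_univ _) m
    fun b _ ↦ ?_
  by_cases hb : ∃ a, F a = b
  · obtain ⟨a, rfl⟩ := hb
    simpa [Set.ncard_eq_toFinset_card'] using hF a
  · rw [Finset.filter_false_of_mem fun a _ ha ↦ hb ⟨a, ha⟩]
    simp

lemma card_offDiag {α : Type*} {s : Set α} (hs : s.Finite) :
    Nat.card s.offDiag = s.ncard * (s.ncard - 1) := by
  classical
  lift s to Finset α using hs
  rw [← Finset.coe_offDiag, Nat.card_coe_set_eq, Set.ncard_coe_finset, Set.ncard_coe_finset,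
    Finset.offDiag_card, Nat.mul_sub_one]

variable {k : Type*} [Field k]

/-- The set of `n`-th roots of unity in `k`; unlike `rootsOfUnity n k` it consists of elements of
`k`. -/
def unitRoots (k : Type*) [Field k] (n : ℕ) : Set k := {c | c ^ n = 1}

/-- The double `2d`'s all of whose lines lie on the surface with affine cone `X`. -/
abbrev DoublesOn (d : ℕ) (X : Set (Fin 4 → k)) : Type _ :=
  {P : Set (Submodule k (Fin 4 → k)) × Set (Submodule k (Fin 4 → k)) //
    IsDoubleTwoD d P.1 P.2 ∧ ∀ L ∈ P.1 ∪ P.2, IsLineOn X L}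

lemma finite_doublesOn {d : ℕ} {X : Set (Fin 4 → k)} (hX : {L | IsLineOn X L}.Finite) :
    Finite (DoublesOn d X) :=
  ((hX.finite_subsets.prod hX.finite_subsets).subset fun _ hP ↦
    ⟨fun _ hL ↦ hP.2 _ (.inl hL), fun _ hL ↦ hP.2 _ (.inr hL)⟩).to_subtype

lemma finite_unitRoots {n : ℕ} (hn : n ≠ 0) : (unitRoots k n).Finite :=
  finite_setOf_pow_eq hn 1

variable {σ : k →+* k} {q : ℕ} {β : (Fin 4 → k) →ₛₗ[σ] (Fin 4 → k) →ₗ[k] k}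
variable {f : Fin 4 → Fin 4 → k}

lemma isLineOn_of_mem_halfDouble_basis (hσ : IsFrobeniusPower σ q) (hf : IsHermitianFrame β f)
    {c c' : k} (hc : c ∈ unitRoots k (q + 1))
    (hc' : c' ∈ unitRoots k (q + 1)) {L : Submodule k (Fin 4 → k)}
    (hL : L ∈ halfDouble (hf.basis (finrank_fin_fun k)) (q + 1) c c') :
    IsLineOn {v | β v v = 0} L :=
  ⟨isLine_of_mem_halfDouble q.succ_ne_zero hL, fun v hv ↦
    (hf.apply_self_eq_sum hσ _ v).trans (sum_repr_pow_eq_zero_of_mem_halfDouble hc hc' hL hv)⟩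

variable [IsAlgClosed k]

lemma finite_isLineOn (hσ : IsFrobeniusPower σ q) (hβ : IsHermitianSpace β)
    (hr : β.SeparatingRight) : {L | IsLineOn {v | β v v = 0} L}.Finite := by
  refine (finite_isotropic_subspaces hσ hβ hr).subset fun L hL ↦ ⟨?_, fun _ hv ↦ hL.2 hv⟩
  rw [finrank_fin_fun, show finrank k L = 2 from hL.1]

lemma ncard_unitRoots (hσ : IsFrobeniusPower σ q) : (unitRoots k (q + 1)).ncard = q + 1 :=
  ncard_setOf_pow_eq hσ.cast_succ_ne_zero one_ne_zero

/-- The double `2(q + 1)` on the surface `β v v = 0` attached to a frame and a pair of distinct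
roots of unity. -/
noncomputable def frameDouble (hσ : IsFrobeniusPower σ q)
    (p : {f : Fin 4 → Fin 4 → k // IsHermitianFrame β f} × (unitRoots k (q + 1)).offDiag) :
    DoublesOn (q + 1) {v | β v v = 0} :=
  let b := p.1.2.basis (finrank_fin_fun k)
  have h := p.2.2
  ⟨(halfDouble b (q + 1) p.2.1.1 p.2.1.2, halfDouble (swapBasis b) (q + 1) p.2.1.1 p.2.1.2),
    isDoubleTwoD_halfDouble hσ.cast_succ_ne_zero h.1 h.2.1 h.2.2, by
      rintro L (hL | hL)
      · exact isLineOn_of_mem_halfDouble_basis hσ p.1.2 h.1 h.2.1 hL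
      · exact isLineOn_of_mem_halfDouble_basis hσ p.1.2 h.2.1 h.1
          ((halfDouble_swapBasis b _ _ _).subset hL)⟩

lemma exists_frame_eq_smul_of_frameDouble_eq (hσ : IsFrobeniusPower σ q) (hq : 4 ≤ q)
    {p p' : {f : Fin 4 → Fin 4 → k // IsHermitianFrame β f} × (unitRoots k (q + 1)).offDiag}
    (h : frameDouble hσ p' = frameDouble hσ p) :
    ∃ (j₀ j₁ : Fin 4) (x : Fin 4 → unitRoots k (q + 1)),
      p'.1.1 = fun m ↦ (x m : k) • p.1.1 (oppositePairsMap j₀ j₁ m) := by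
  obtain ⟨hc, hc', hcc⟩ := p.2.2
  have five_le : 5 ≤ {s : k | s ^ (q + 1) = -1}.ncard := by
    rw [ncard_setOf_pow_eq hσ.cast_succ_ne_zero (neg_ne_zero.2 one_ne_zero)]
    lia
  obtain ⟨j₀, j₁, repr_eq_zero⟩ := exists_repr_eq_zero_of_halfDouble_eq five_le
    (ne_zero_of_pow_eq q.succ_ne_zero one_ne_zero hc)
    (ne_zero_of_pow_eq q.succ_ne_zero one_ne_zero hc') hcc
    (congrArg (·.1.1) h).symm
  have (m : Fin 4) := p.1.2.exists_pow_eq_one_and_eq_smul hσ (finrank_fin_fun k) p'.1.2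
    (i := oppositePairsMap j₀ j₁ m) (m := m) fun i hi ↦ by simpa using repr_eq_zero m i hi
  choose x hx hpx using this
  exact ⟨j₀, j₁, fun m ↦ ⟨x m, hx m⟩, funext hpx⟩

lemma eq_of_frameDouble_eq_of_frame_eq (hσ : IsFrobeniusPower σ q)
    {p p' : {f : Fin 4 → Fin 4 → k // IsHermitianFrame β f} × (unitRoots k (q + 1)).offDiag}
    (h : frameDouble hσ p = frameDouble hσ p') (hp : p.1 = p'.1) : p = p' := by
  obtain ⟨f, c, hc⟩ := p
  obtain ⟨g, c', hc'⟩ := p'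
  obtain rfl : f = g := hp
  obtain ⟨s, hs⟩ := IsAlgClosed.exists_pow_nat_eq (-1 : k) q.succ_pos
  obtain ⟨h₁, h₂⟩ := eq_and_eq_of_halfDouble_eq q.succ_ne_zero hs (congrArg (·.1.1) h)
  exact congrArg (f, ·) (Subtype.ext (Prod.ext h₁ h₂))

lemma ncard_frameDouble_fiber_le (hσ : IsFrobeniusPower σ q) (hq : 4 ≤ q)
    (p : {f : Fin 4 → Fin 4 → k // IsHermitianFrame β f} × (unitRoots k (q + 1)).offDiag) :
    {p' | frameDouble hσ p' = frameDouble hσ p}.ncard ≤ 16 * (q + 1) ^ 4 := by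
  let rescale (x : Fin 4 × Fin 4 × (Fin 4 → unitRoots k (q + 1))) (m : Fin 4) : Fin 4 → k :=
    (x.2.2 m : k) • p.1.1 (oppositePairsMap x.1 x.2.1 m)
  have := (finite_unitRoots (k := k) q.succ_ne_zero).to_subtype
  calc {p' | frameDouble hσ p' = frameDouble hσ p}.ncard
      ≤ (Set.range rescale).ncard := by
        refine Set.ncard_le_ncard_of_injOn (fun p' ↦ p'.1.1) (fun p' hp' ↦ ?_) ?_
          (Set.finite_range _)
        · obtain ⟨j₀, j₁, x, hx⟩ := exists_frame_eq_smul_of_frameDouble_eq hσ hq hp'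
          exact ⟨(j₀, j₁, x), hx.symm⟩
        · exact fun p₁ h₁ p₂ h₂ h ↦
            eq_of_frameDouble_eq_of_frame_eq hσ (h₁.trans h₂.symm) (Subtype.ext h)
    _ ≤ Nat.card (Fin 4 × Fin 4 × (Fin 4 → unitRoots k (q + 1))) := by
        rw [← Set.image_univ, ← Set.ncard_univ]
        exact Set.ncard_image_le
    _ = 16 * (q + 1) ^ 4 := by
        rw [Nat.card_prod, Nat.card_prod, Nat.card_fun, Nat.card_coe_set_eq, ncard_unitRoots hσ]
        simp [← mul_assoc]

theorem card_frames_mul_le (hσ : IsFrobeniusPower σ q) (hq : 4 ≤ q) (hβ : IsHermitianSpace β)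
    (hr : β.SeparatingRight) :
    Nat.card {f : Fin 4 → Fin 4 → k // IsHermitianFrame β f} * ((q + 1) * q) ≤
      16 * (q + 1) ^ 4 * Nat.card (DoublesOn (q + 1) {v | β v v = 0}) := by
  have := hβ.finite_isHermitianFrame hσ 4
  have := finite_doublesOn (d := q + 1) (finite_isLineOn hσ hβ hr)
  have unitRoots_finite := finite_unitRoots (k := k) q.succ_ne_zero
  have := unitRoots_finite.offDiag.to_subtype
  have := card_le_mul_card_of_ncard_fiber_le (frameDouble (β := β) hσ)
    (ncard_frameDouble_fiber_le hσ hq)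
  rwa [Nat.card_prod, card_offDiag unitRoots_finite, ncard_unitRoots hσ, Nat.add_sub_cancel] at this

lemma card_isHermitianFrame_four (hσ : IsFrobeniusPower σ q) (hβ : IsHermitianSpace β) :
    Nat.card {f : Fin 4 → Fin 4 → k // IsHermitianFrame β f} =
      q ^ 6 * (q + 1) * (q ^ 2 - 1) * (q ^ 3 + 1) * (q ^ 4 - 1) := by
  have q_pos : 0 < q := zero_lt_one.trans hσ.one_lt
  have := hβ.card_isHermitianFrame hσ (finrank_fin_fun k)
  have q_pow_ne_zero : (q : ℤ) ^ 4 ≠ 0 := by positivity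
  zify [Nat.one_le_pow 2 q q_pos, Nat.one_le_pow 4 q q_pos]
  refine mul_left_cancel₀ q_pow_ne_zero (this.trans ?_)
  simp only [Finset.prod_range_succ, Finset.prod_range_zero]
  ring

theorem card_doublesOn_lower_bound (hσ : IsFrobeniusPower σ q) (hq : 4 ≤ q)
    (hβ : IsHermitianSpace β) (hr : β.SeparatingRight) :
    (q ^ 3 + 1) * (q ^ 2 + 1) * (q - 1) ^ 2 * q ^ 7 ≤
      16 * Nat.card (DoublesOn (q + 1) {v | β v v = 0}) := by
  refine le_of_mul_le_mul_left (a := (q + 1) ^ 4) ?_ (by positivity)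
  calc (q + 1) ^ 4 * ((q ^ 3 + 1) * (q ^ 2 + 1) * (q - 1) ^ 2 * q ^ 7)
      = Nat.card {f : Fin 4 → Fin 4 → k // IsHermitianFrame β f} * ((q + 1) * q) := by
        rw [card_isHermitianFrame_four hσ hβ, show q ^ 4 - 1 = (q ^ 2 + 1) * (q ^ 2 - 1) from
          Nat.sq_sub_sq (q ^ 2) 1 ▸ by ring_nf, show q ^ 2 - 1 = (q + 1) * (q - 1) from
          Nat.sq_sub_sq q 1]
        ring
    _ ≤ 16 * (q + 1) ^ 4 * Nat.card (DoublesOn (q + 1) {v | β v v = 0}) :=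
        card_frames_mul_le hσ hq hβ hr
    _ = (q + 1) ^ 4 * (16 * Nat.card (DoublesOn (q + 1) {v | β v v = 0})) := by ring

end Counting

section FrobeniusForm

variable {k : Type*} [Field k] {n : Type*} [Fintype n] [DecidableEq n] {A : Matrix n n k}

lemma separatingLeft_toLinearMapₛₗ₂' (σ : k →+* k) (hA : IsUnit A) :
    (Matrix.toLinearMapₛₗ₂' k σ (RingHom.id k) A).SeparatingLeft := by
  intro x hx
  have : Matrix.vecMul (σ ∘ x) A = 0 := funext fun j ↦ by
    simpa [Matrix.toLinearMapₛₗ₂'_apply, Matrix.vecMul, dotProduct, Pi.single_apply]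
      using hx (Pi.single j 1)
  have := Matrix.vecMul_injective_of_isUnit hA (this.trans (Matrix.zero_vecMul A).symm)
  exact funext fun i ↦ (map_eq_zero σ).1 (congrFun this i)

lemma separatingRight_toLinearMapₛₗ₂' (σ : k →+* k) (hA : IsUnit A) :
    (Matrix.toLinearMapₛₗ₂' k σ (RingHom.id k) A).SeparatingRight := by
  intro y hy
  have : Matrix.mulVec A y = 0 := funext fun i ↦ by
    simpa [Matrix.toLinearMapₛₗ₂'_apply, Matrix.mulVec, dotProduct, Pi.single_apply, mul_comm]
      using hy (Pi.single i 1)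
  exact Matrix.mulVec_injective_of_isUnit hA (this.trans (Matrix.mulVec_zero A).symm)

lemma extremalCone_eq {σ : k →+* k} {q : ℕ} (hσ : IsFrobeniusPower σ q)
    (A : Matrix (Fin 4) (Fin 4) k) : extremalCone k q A =
      {v | Matrix.toLinearMapₛₗ₂' k σ (RingHom.id k) A v v = 0} := by
  ext v
  suffices frobForm q A v = Matrix.toLinearMapₛₗ₂' k σ (RingHom.id k) A v v by
    rw [extremalCone, Set.mem_ofPred_eq, Set.mem_ofPred_eq, this]
  simp only [frobForm, Matrix.toLinearMapₛₗ₂'_apply, hσ.apply, smul_eq_mul, RingHom.id_apply]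
  exact Finset.sum_congr rfl fun i _ ↦ Finset.sum_congr rfl fun j _ ↦ by ring

end FrobeniusForm

lemma isFrobeniusPower_iterateFrobenius (k : Type*) [Field k] (p e : ℕ) [ExpChar k p] [CharP k p]
    (he : e ≠ 0) : IsFrobeniusPower (iterateFrobenius k p e) (p ^ e) where
  apply := iterateFrobenius_def p e
  cast_eq_zero := by rw [Nat.cast_pow, CharP.cast_eq_zero, zero_pow he]

/-- Let `X` be a smooth extremal surface of degree
`d = q+1 ≥ 5` in ℙ³(k).  Then the number `N` of double `2d`'s all of whose
`4d` lines lie on `X` satisfies `16·N ≥ (q³+1)(q²+1)(q−1)²q⁷`. -/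
theorem count_double_2d_lower_bound {k : Type*} [Field k] [IsAlgClosed k]
    (p e q : ℕ) (hp : p.Prime) (hchar : CharP k p) (he : 1 ≤ e) (hq : q = p ^ e)
    (A : Matrix (Fin 4) (Fin 4) k) (hA : IsUnit A) (hd : 5 ≤ q + 1) :
    16 * Nat.card {P : Set (Submodule k (Fin 4 → k)) × Set (Submodule k (Fin 4 → k)) //
        IsDoubleTwoD (q + 1) P.1 P.2 ∧
          ∀ L ∈ P.1 ∪ P.2, IsLineOn (extremalCone k q A) L}
      ≥ (q ^ 3 + 1) * (q ^ 2 + 1) * (q - 1) ^ 2 * q ^ 7 := by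
  subst hq
  have := Fact.mk hp
  have hσ := isFrobeniusPower_iterateFrobenius k p e (Nat.one_le_iff_ne_zero.1 he)
  have hl := separatingLeft_toLinearMapₛₗ₂' (iterateFrobenius k p e) hA
  have hr := separatingRight_toLinearMapₛₗ₂' (iterateFrobenius k p e) hA
  rw [extremalCone_eq hσ]
  exact card_doublesOn_lower_bound hσ (Nat.le_of_succ_le_succ hd)
    ⟨span_isHermitianVector_eq_top hσ hl hr, hl⟩ hr
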